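/- arXiv:1904.11868 — 10 statements merged into one kernel-verified Lean document; each statement's English description precedes it below -/
import Mathlib

section
/- Let F be a finite field and let n ≥ 2 be an integer. The unitary Cayley graph Cay(M_n(F), GL_n(F)) is a strongly regular graph (i.e., there exist parameters k, λ, μ such that it is strongly regular with parameters (q^(n^2), k, λ, μ)) if and only if n = 2. -/
/-- The unitary Cayley graph `Cay(M_n(F), GL_n(F))`: vertices are the `n × n`
matrices over `F`, and two matrices `A`, `B` are adjacent iff `A - B` is invertible. -/
def unitaryCayley (F : Type*) [Field F] (n : ℕ) :
    SimpleGraph (Matrix (Fin n) (Fin n) F) where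
  Adj A B := A ≠ B ∧ IsUnit (A - B)
  symm := ⟨fun A B h => ⟨h.1.symm, by rw [← neg_sub]; exact h.2.neg⟩⟩
  loopless := ⟨fun A h => h.1 rfl⟩

namespace UCay

/-- Number of units `X` such that `1 - X D` is a unit as well. -/
noncomputable def cnt {F : Type*} [Field F] {n : ℕ} (D : Matrix (Fin n) (Fin n) F) : ℕ :=
  Nat.card {Y : (Matrix (Fin n) (Fin n) F)ˣ // IsUnit (1 - Y.1 * D)}

lemma adj_iff {F : Type*} [Field F] {n : ℕ} (hn : 2 ≤ n) (A B : Matrix (Fin n) (Fin n) F) :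
    (unitaryCayley F n).Adj A B ↔ IsUnit (A - B) := by
  haveI : Nonempty (Fin n) := ⟨⟨0, by omega⟩⟩
  constructor
  · intro h
    exact h.2
  · intro h
    refine ⟨?_, h⟩
    rintro rfl
    rw [sub_self] at h
    exact not_isUnit_zero h

lemma card_common {F : Type*} [Field F] {n : ℕ} (hn : 2 ≤ n) (A B : Matrix (Fin n) (Fin n) F) :
    Nat.card ((unitaryCayley F n).commonNeighbors A B) = cnt (A - B) := by
  unfold cnt
  symm
  have key : ∀ Y : (Matrix (Fin n) (Fin n) F)ˣ,
      IsUnit (1 - Y.1 * (A - B)) ↔ IsUnit (B - (A - (Y⁻¹).1)) := by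
    intro Y
    have : B - (A - (Y⁻¹).1) = (Y⁻¹).1 * (1 - Y.1 * (A - B)) := by
      rw [mul_sub, ← mul_assoc, Units.inv_mul]
      simp
      abel
    rw [this, Units.isUnit_units_mul]
  refine Nat.card_eq_of_bijective
    (fun Y => ⟨A - (Y.1⁻¹).1, ?_⟩) ⟨?_, ?_⟩
  · rw [SimpleGraph.mem_commonNeighbors, adj_iff hn, adj_iff hn]
    refine ⟨?_, (key Y.1).1 Y.2⟩
    rw [sub_sub_cancel]
    exact Units.isUnit _
  · intro Y Z h
    have h1 := congrArg Subtype.val h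
    simp only [sub_right_inj] at h1
    exact Subtype.ext (inv_injective (Units.ext h1))
  · rintro ⟨X, hX⟩
    rw [SimpleGraph.mem_commonNeighbors, adj_iff hn, adj_iff hn] at hX
    obtain ⟨⟨U, hU⟩, h2⟩ := hX
    have hX' : X = A - U.1 := by rw [hU]; abel
    refine ⟨⟨U⁻¹, ?_⟩, ?_⟩
    · rw [key, inv_inv, ← hX']
      exact h2
    · apply Subtype.ext
      simp [hX']

lemma cnt_mul {F : Type*} [Field F] {n : ℕ} (D : Matrix (Fin n) (Fin n) F)
    (P Q : (Matrix (Fin n) (Fin n) F)ˣ) : cnt (P.1 * D * Q.1) = cnt D := by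
  unfold cnt
  have e : (Matrix (Fin n) (Fin n) F)ˣ ≃ (Matrix (Fin n) (Fin n) F)ˣ :=
    (Equiv.mulLeft Q).trans (Equiv.mulRight P)
  refine Nat.card_congr (Equiv.subtypeEquiv ((Equiv.mulLeft Q).trans (Equiv.mulRight P)) ?_)
  intro Y
  have : 1 - (Q * Y * P).1 * D = Q.1 * (1 - Y.1 * (P.1 * D * Q.1)) * (Q⁻¹).1 := by
    rw [mul_sub, sub_mul]
    simp only [mul_one, Units.mul_inv, Units.val_mul, mul_assoc]
  simp only [Equiv.trans_apply, Equiv.coe_mulLeft, Equiv.coe_mulRight]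
  rw [this, Units.isUnit_mul_units, Units.isUnit_units_mul]

lemma diag_unit {F : Type*} [Field F] {n : ℕ} (M : Matrix (Fin n) (Fin n) F) :
    ∃ (P Q : (Matrix (Fin n) (Fin n) F)ˣ) (d : Fin n → F), M = P.1 * Matrix.diagonal d * Q.1 := by
  obtain ⟨L, L', d, h⟩ := Matrix.Pivot.exists_list_transvec_mul_diagonal_mul_list_transvec M
  have hu : ∀ L : List (Matrix.TransvectionStruct (Fin n) F),
      IsUnit ((L.map Matrix.TransvectionStruct.toMatrix).prod) := by
    intro L
    rw [Matrix.isUnit_iff_isUnit_det, Matrix.TransvectionStruct.det_toMatrix_prod]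
    exact isUnit_one
  obtain ⟨P, hP⟩ := hu L
  obtain ⟨Q, hQ⟩ := hu L'
  exact ⟨P, Q, d, by rw [hP, hQ, h]⟩

lemma cnt_unit {F : Type*} [Field F] {n : ℕ} (D : Matrix (Fin n) (Fin n) F) (h : IsUnit D) :
    cnt D = cnt (1 : Matrix (Fin n) (Fin n) F) := by
  obtain ⟨U, rfl⟩ := h
  simpa using cnt_mul 1 U 1

lemma cnt_sing {F : Type*} [Field F] (D : Matrix (Fin 2) (Fin 2) F) (h : ¬ IsUnit D)
    (h0 : D ≠ 0) : cnt D = cnt (!![1, 0; 0, 0] : Matrix (Fin 2) (Fin 2) F) := by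
  obtain ⟨P, Q, d, rfl⟩ := diag_unit D
  rw [Units.isUnit_mul_units, Units.isUnit_units_mul, Matrix.isUnit_iff_isUnit_det,
    Matrix.det_diagonal, Fin.prod_univ_two, isUnit_iff_ne_zero, not_not] at h
  have hd : ¬ (d 0 = 0 ∧ d 1 = 0) := by
    rintro ⟨h1, h2⟩
    apply h0
    have : d = 0 := by
      ext i
      fin_cases i <;> simp [h1, h2]
    rw [this]
    simp
  rw [cnt_mul]
  by_cases h1 : d 1 = 0
  · have hd0 : d 0 ≠ 0 := fun h => hd ⟨h, h1⟩
    have hU : IsUnit (!![d 0, 0; 0, 1] : Matrix (Fin 2) (Fin 2) F) := by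
      rw [Matrix.isUnit_iff_isUnit_det, isUnit_iff_ne_zero]
      simpa [Matrix.det_fin_two] using hd0
    obtain ⟨U, hU⟩ := hU
    rw [← cnt_mul !![1, 0; 0, 0] U 1, hU]
    congr 1
    ext i j
    fin_cases i <;> fin_cases j <;> simp [Matrix.mul_apply, Fin.sum_univ_two, h1]
  · have h00 : d 0 = 0 := by
      rcases mul_eq_zero.1 h with h | h
      · exact h
      · exact absurd h h1
    have hU : IsUnit (!![0, 1; d 1, 0] : Matrix (Fin 2) (Fin 2) F) := by
      rw [Matrix.isUnit_iff_isUnit_det, isUnit_iff_ne_zero]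
      simpa [Matrix.det_fin_two] using h1
    have hV : IsUnit (!![0, 1; 1, 0] : Matrix (Fin 2) (Fin 2) F) := by
      rw [Matrix.isUnit_iff_isUnit_det, isUnit_iff_ne_zero]
      simp [Matrix.det_fin_two]
    obtain ⟨U, hU⟩ := hU
    obtain ⟨V, hV⟩ := hV
    rw [← cnt_mul !![1, 0; 0, 0] U V, hU, hV]
    congr 1
    ext i j
    fin_cases i <;> fin_cases j <;> simp [Matrix.mul_apply, Fin.sum_univ_two, h00]

/-- The transvection `1 + t E_{ij}` as a unit. -/
def tv {F : Type*} [Field F] {n : ℕ} (i j : Fin n) (hij : i ≠ j) (t : F) :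
    (Matrix (Fin n) (Fin n) F)ˣ where
  val := Matrix.transvection i j t
  inv := Matrix.transvection i j (-t)
  val_inv := by rw [Matrix.transvection_mul_transvection_same _ _ hij]; simp
  inv_val := by rw [Matrix.transvection_mul_transvection_same _ _ hij]; simp

lemma nonunit_of_fixed {F : Type*} [Field F] {n : ℕ} (Y : (Matrix (Fin n) (Fin n) F)ˣ)
    (D : Matrix (Fin n) (Fin n) F) (w : Fin n → F) (hw : w ≠ 0)
    (h : D.mulVec (Y.1.mulVec w) = w) : ¬ IsUnit (1 - Y.1 * D) := by
  rintro ⟨U, hU⟩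
  have h1 : U.1.mulVec (Y.1.mulVec w) = 0 := by
    rw [hU, Matrix.sub_mulVec, ← Matrix.mulVec_mulVec, h]
    simp
  have h2 : w = (Y⁻¹).1.mulVec ((U⁻¹).1.mulVec (U.1.mulVec (Y.1.mulVec w))) := by
    simp [Matrix.mulVec_mulVec]
  rw [h1] at h2
  apply hw
  rw [h2]
  simp

lemma entry_of_nonunit {F : Type*} [Field F] {n : ℕ} (i : Fin n) (Y : Matrix (Fin n) (Fin n) F)
    (h : ¬ IsUnit (1 - Y * Matrix.single i i 1)) : Y i i = 1 := by
  by_contra hne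
  apply h
  rw [← Matrix.mulVec_injective_iff_isUnit]
  rw [← Matrix.coe_mulVecLin, ← LinearMap.ker_eq_bot, LinearMap.ker_eq_bot']
  intro v hv
  rw [Matrix.mulVecLin_apply, Matrix.sub_mulVec, ← Matrix.mulVec_mulVec, sub_eq_zero,
    Matrix.one_mulVec] at hv
  have hs : (Matrix.single i i (1:F)).mulVec v = Pi.single i (v i) := by
    ext k
    by_cases hk : k = i
    · subst hk
      simp [Matrix.single_mulVec]
    · simp [Matrix.single_mulVec, hk]
  rw [hs] at hv
  have hi := congrFun hv i
  rw [Matrix.mulVec_single] at hi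
  simp at hi
  have : v i = 0 := by
    by_contra h0
    apply hne
    have : (Y i i - 1) * v i = 0 := by linear_combination -hi
    rcases mul_eq_zero.1 this with h | h
    · linear_combination h
    · exact absurd h h0
  rw [hv, this]
  simp

section inj
variable {F : Type*} [Field F] {n : ℕ} {a b : Fin n}

open Classical in
/-- The injection from the rank-one bad set to the rank-two bad set. -/
noncomputable def phi (hab : b ≠ a) (Y : (Matrix (Fin n) (Fin n) F)ˣ) :
    (Matrix (Fin n) (Fin n) F)ˣ :=
  if Y.1 a b = 0 ∧ Y.1 b b = 1 then tv b a hab (-(Y.1 b a)) * Y * tv b a hab (Y.1 b a)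
  else Y * tv b a hab (-(Y.1 b a))

lemma right_a (hab : b ≠ a) (M : Matrix (Fin n) (Fin n) F) (t : F) (i : Fin n) :
    (M * (tv b a hab t).1) i a = M i a + t * M i b := by
  simp [tv]

lemma right_b (hab : b ≠ a) (M : Matrix (Fin n) (Fin n) F) (t : F) (i : Fin n) :
    (M * (tv b a hab t).1) i b = M i b := by
  simp [tv, hab]

lemma left_b (hab : b ≠ a) (M : Matrix (Fin n) (Fin n) F) (t : F) (i : Fin n) :
    ((tv b a hab t).1 * M) b i = M b i + t * M a i := by
  simp [tv]

lemma left_a (hab : b ≠ a) (M : Matrix (Fin n) (Fin n) F) (t : F) (i : Fin n) :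
    ((tv b a hab t).1 * M) a i = M a i := by
  simp [tv, hab.symm]

lemma fixed_block (hab : b ≠ a) (Y : (Matrix (Fin n) (Fin n) F)ˣ) (x y : F)
    (hxy : ¬ (x = 0 ∧ y = 0)) (h1 : Y.1 a a * x + Y.1 a b * y = x)
    (h2 : Y.1 b a * x + Y.1 b b * y = y) :
    ¬ IsUnit (1 - Y.1 * (Matrix.single a a 1 + Matrix.single b b 1)) := by
  apply nonunit_of_fixed Y _ (Pi.single a x + Pi.single b y)
  · intro h
    apply hxy
    have ha := congrFun h a
    have hb := congrFun h b
    simp [hab, hab.symm] at ha hb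
    exact ⟨ha, hb⟩
  · rw [Matrix.mulVec_add, Matrix.mulVec_single, Matrix.mulVec_single, Matrix.add_mulVec]
    simp only [Matrix.single_mulVec]
    ext k
    by_cases hka : k = a
    · subst hka
      simp [hab.symm]
      linear_combination h1
    · by_cases hkb : k = b
      · subst hkb
        simp [hab]
        linear_combination h2
      · simp [hka, hkb]

lemma phi_mem (hab : b ≠ a) (Y : (Matrix (Fin n) (Fin n) F)ˣ) (hY : Y.1 a a = 1) :
    ¬ IsUnit (1 - (phi hab Y).1 * (Matrix.single a a 1 + Matrix.single b b 1)) := by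
  unfold phi
  split_ifs with h
  · apply fixed_block hab _ 0 1 (by simp)
    · simp only [Units.val_mul, right_a, right_b, left_a, left_b, h.1, h.2]
      ring
    · simp only [Units.val_mul, right_a, right_b, left_a, left_b, h.1, h.2]
      ring
  · apply fixed_block hab _ 1 (Y.1 b a) (by simp)
    · simp only [Units.val_mul, right_a, right_b, left_a, left_b, hY]
      ring
    · simp only [Units.val_mul, right_a, right_b, left_a, left_b]
      ring

lemma phi_cond (hab : b ≠ a) (Y : (Matrix (Fin n) (Fin n) F)ˣ) :
    ((phi hab Y).1 a b = 0 ∧ (phi hab Y).1 b b = 1) ↔ (Y.1 a b = 0 ∧ Y.1 b b = 1) := by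
  unfold phi
  split_ifs with h
  · simp only [Units.val_mul, right_a, right_b, left_a, left_b, h.1, h.2]
    simp
  · simp only [Units.val_mul, right_a, right_b, left_a, left_b]

lemma phi_inj (hab : b ≠ a) (Y Z : (Matrix (Fin n) (Fin n) F)ˣ) (hY : Y.1 a a = 1)
    (hZ : Z.1 a a = 1) (h : phi hab Y = phi hab Z) : Y = Z := by
  have hc := phi_cond hab Y
  rw [h, phi_cond hab Z] at hc
  replace hc := hc.symm
  have haa := congrArg (fun U : (Matrix (Fin n) (Fin n) F)ˣ => U.1 a a) h
  have hbase := congrArg (fun U : (Matrix (Fin n) (Fin n) F)ˣ => U.1 b a) h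
  have hab' := congrArg (fun U : (Matrix (Fin n) (Fin n) F)ˣ => U.1 a b) h
  have hbb := congrArg (fun U : (Matrix (Fin n) (Fin n) F)ˣ => U.1 b b) h
  unfold phi at h haa hbase hab' hbb
  by_cases hy : Y.1 a b = 0 ∧ Y.1 b b = 1
  · have hz := hc.1 hy
    rw [if_pos hy, if_pos hz] at h hbase
    simp only [Units.val_mul, mul_assoc, left_b] at hbase
    simp only [right_a, hy.1, hy.2, hz.1, hz.2, hY, hZ] at hbase
    have ht : Y.1 b a = Z.1 b a := by linear_combination hbase
    rw [ht] at h
    exact mul_left_cancel (mul_right_cancel h)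
  · have hz := fun hz => hy (hc.2 hz)
    rw [if_neg hy, if_neg hz] at h haa hbase hab' hbb
    simp only [Units.val_mul, right_a, right_b] at haa hbase hab' hbb
    have ht : Y.1 b a = Z.1 b a := by
      by_contra hne
      apply hy
      rw [hY, hZ, ← hab'] at haa
      rw [← hbb] at hbase
      constructor
      · have : (Y.1 b a - Z.1 b a) * Y.1 a b = 0 := by linear_combination -haa
        exact (mul_eq_zero.1 this).resolve_left (sub_ne_zero.2 hne)
      · have : (Y.1 b a - Z.1 b a) * (1 - Y.1 b b) = 0 := by linear_combination hbase
        have := (mul_eq_zero.1 this).resolve_left (sub_ne_zero.2 hne)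
        linear_combination -this
    rw [ht] at h
    exact mul_right_cancel h

lemma cnt_lt [Finite F] {c : Fin n} (hab : b ≠ a) (hac : c ≠ a) (hbc : c ≠ b) :
    cnt (Matrix.single a a (1 : F)) ≠ cnt (Matrix.single a a (1 : F) + Matrix.single b b 1) := by
  classical
  haveI := Fintype.ofFinite F
  intro heq
  unfold cnt at heq
  rw [Nat.card_eq_fintype_card, Nat.card_eq_fintype_card] at heq
  have hcompl := Fintype.card_compl_eq_card_compl _ _ heq
  let f : {Y : (Matrix (Fin n) (Fin n) F)ˣ // ¬ IsUnit (1 - Y.1 * Matrix.single a a (1 : F))} →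
      {Y : (Matrix (Fin n) (Fin n) F)ˣ //
        ¬ IsUnit (1 - Y.1 * (Matrix.single a a (1 : F) + Matrix.single b b 1))} :=
    fun Y => ⟨phi hab Y.1, phi_mem hab Y.1 (entry_of_nonunit a _ Y.2)⟩
  have hf : Function.Injective f := by
    intro Y Z h
    exact Subtype.ext (phi_inj hab _ _ (entry_of_nonunit a _ Y.2) (entry_of_nonunit a _ Z.2)
      (congrArg Subtype.val h))
  have hs : Function.Surjective f :=
    ((Fintype.bijective_iff_injective_and_card f).2 ⟨hf, hcompl⟩).2
  have hW : IsUnit (Matrix.swap F a c) := by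
    exact ⟨⟨_, _, Matrix.swap_mul_self a c, Matrix.swap_mul_self a c⟩, rfl⟩
  obtain ⟨W, hW⟩ := hW
  have haa : W.1 a a = 0 := by
    rw [hW]; simp [Matrix.swap, Equiv.Perm.permMatrix, hac, hac.symm]
  have hab1 : W.1 a b = 0 := by
    rw [hW]; simp [Matrix.swap, Equiv.Perm.permMatrix, hbc]
  have hbb : W.1 b b = 1 := by
    rw [hW]
    simp [Matrix.swap, Equiv.Perm.permMatrix, Equiv.swap_apply_of_ne_of_ne hab hbc.symm]
  obtain ⟨Y, hY⟩ := hs ⟨W, fixed_block hab W 0 1 (by simp) (by simp [hab1]) (by simp [hbb])⟩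
  have hY' : phi hab Y.1 = W := congrArg Subtype.val hY
  have hc := (phi_cond hab Y.1).1 (by rw [hY']; exact ⟨hab1, hbb⟩)
  unfold phi at hY'
  rw [if_pos hc] at hY'
  rw [← hY'] at haa
  simp only [Units.val_mul, right_a, left_a, hc.1, entry_of_nonunit a _ Y.2] at haa
  simp at haa

end inj

end UCay

/-- For a finite field `F` with `q` elements and `n ≥ 2`, the unitary Cayley graph
`Cay(M_n(F), GL_n(F))` is strongly regular (with some parameters `(q ^ n ^ 2, k, l, m)`)
if and only if `n = 2`. -/
theorem unitaryCayley_isSRG_iff (F : Type*) [Field F] [Fintype F]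
    (n : ℕ) (hn : 2 ≤ n) :
    letI : DecidableRel (unitaryCayley F n).Adj := Classical.decRel _
    (∃ k l m : ℕ,
        (unitaryCayley F n).IsSRGWith ((Fintype.card F) ^ (n ^ 2)) k l m) ↔ n = 2 := by
  letI : DecidableRel (unitaryCayley F n).Adj := Classical.decRel _
  constructor
  · rintro ⟨k, l, m, h⟩
    by_contra hne
    let a : Fin n := ⟨0, by omega⟩
    let b : Fin n := ⟨1, by omega⟩
    let c : Fin n := ⟨2, by omega⟩
    have hab : b ≠ a := by simp [a, b]
    have hac : c ≠ a := by simp [a, c]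
    have hbc : c ≠ b := by simp [b, c]
    have key : ∀ D : Matrix (Fin n) (Fin n) F, D a a = 1 → (∀ i, D i c = 0) →
        UCay.cnt D = m := by
      intro D h1 h2
      have h3 : D ≠ 0 := by
        rintro rfl
        simp at h1
      have h4 : ¬ (unitaryCayley F n).Adj D 0 := by
        rw [UCay.adj_iff hn, sub_zero, Matrix.isUnit_iff_isUnit_det,
          Matrix.det_eq_zero_of_column_eq_zero c h2]
        simp
      rw [← h.of_not_adj h3 h4, ← Nat.card_eq_fintype_card, UCay.card_common hn, sub_zero]
    refine UCay.cnt_lt (F := F) hab hac hbc ?_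
    rw [key, key]
    · simp [hab]
    · intro i
      simp [hac.symm, hbc.symm]
    · simp
    · intro i
      simp [hac.symm]
  · rintro rfl
    refine ⟨UCay.cnt (0 : Matrix (Fin 2) (Fin 2) F), UCay.cnt (1 : Matrix (Fin 2) (Fin 2) F),
      UCay.cnt (!![1, 0; 0, 0] : Matrix (Fin 2) (Fin 2) F), ?_, ?_, ?_, ?_⟩
    · rw [← Nat.card_eq_fintype_card, ← Nat.card_eq_fintype_card (α := F)]
      simp [Matrix, Nat.card_fun, ← pow_mul]
    · intro v
      rw [← SimpleGraph.card_neighborSet_eq_degree, ← Nat.card_eq_fintype_card, ← sub_self v,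
        ← UCay.card_common le_rfl]
      congr! 2
      ext w
      simp [SimpleGraph.mem_commonNeighbors]
    · intro v w hvw
      rw [UCay.adj_iff le_rfl] at hvw
      rw [← Nat.card_eq_fintype_card, UCay.card_common le_rfl, UCay.cnt_unit _ hvw]
    · intro v w hne hvw
      rw [UCay.adj_iff le_rfl] at hvw
      rw [← Nat.card_eq_fintype_card, UCay.card_common le_rfl,
        UCay.cnt_sing _ hvw (sub_ne_zero.2 hne)]
end

section
/- Let F be a finite field and n > 2 an integer. Then the unitary Cayley graph Cay(M_n(F), GL_n(F)) is not strongly regular: there do not exist parameters k, λ, μ such that it is strongly regular with parameters (q^(n^2), k, λ, μ). -/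
/-- Projection matrix onto the coordinates in the image of `e`. -/
def projMat (F : Type*) [Field F] {n r : ℕ} (e : Fin r → Fin n) : Matrix (Fin n) (Fin n) F :=
  (1 : Matrix (Fin n) (Fin n) F).submatrix id e * (1 : Matrix (Fin n) (Fin n) F).submatrix e id

lemma det_one_sub_projMat {F : Type*} [Field F] {n r : ℕ} (e : Fin r → Fin n)
    (Y : Matrix (Fin n) (Fin n) F) :
    (1 - Y * projMat F e).det = (1 - Y.submatrix e e).det := by
  unfold projMat
  rw [← Matrix.mul_assoc, Matrix.det_one_sub_mul_comm]
  congr 2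
  ext i j
  simp [Matrix.mul_apply, Matrix.one_apply]

lemma ncard_common {F : Type*} [Field F] [Fintype F] {n r : ℕ} [NeZero n] (e : Fin r → Fin n) :
    ((unitaryCayley F n).commonNeighbors 0 (projMat F e)).ncard =
      {Y : Matrix (Fin n) (Fin n) F | Y.det ≠ 0 ∧ (1 - Y.submatrix e e).det ≠ 0}.ncard := by
  have hset : (unitaryCayley F n).commonNeighbors 0 (projMat F e) =
      {X | X.det ≠ 0 ∧ (X - projMat F e).det ≠ 0} := by
    ext X
    have h0 : ¬ IsUnit (0 : Matrix (Fin n) (Fin n) F) := not_isUnit_zero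
    simp only [SimpleGraph.mem_commonNeighbors, unitaryCayley, zero_sub, IsUnit.neg_iff,
      Set.mem_ofPred_eq, ← isUnit_iff_ne_zero, ← Matrix.isUnit_iff_isUnit_det]
    rw [← neg_sub X, IsUnit.neg_iff]
    constructor
    · rintro ⟨h1, h2⟩
      exact ⟨h1.2, h2.2⟩
    · rintro ⟨h1, h2⟩
      refine ⟨⟨?_, h1⟩, ⟨?_, h2⟩⟩
      · rintro rfl; exact h0 h1
      · rintro rfl; rw [sub_self] at h2; exact h0 h2
  rw [hset]
  have key : ∀ X : Matrix (Fin n) (Fin n) F, X.det ≠ 0 →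
      (X - projMat F e).det = X.det * (1 - X⁻¹.submatrix e e).det := by
    intro X hX
    rw [← det_one_sub_projMat, ← Matrix.det_mul, Matrix.mul_sub, ← Matrix.mul_assoc,
      Matrix.mul_nonsing_inv _ (isUnit_iff_ne_zero.2 hX), Matrix.mul_one, Matrix.one_mul]
  have hinv : ∀ X : Matrix (Fin n) (Fin n) F, X.det ≠ 0 → X⁻¹.det ≠ 0 := by
    intro X hX
    rw [Matrix.det_nonsing_inv]
    simpa using hX
  have hii : ∀ X : Matrix (Fin n) (Fin n) F, X.det ≠ 0 → X⁻¹⁻¹ = X := by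
    intro X hX
    exact Matrix.nonsing_inv_nonsing_inv X (isUnit_iff_ne_zero.2 hX)
  refine Set.ncard_congr (fun X _ => X⁻¹) ?_ ?_ ?_
  · rintro X ⟨h1, h2⟩
    rw [key X h1] at h2
    exact ⟨hinv X h1, right_ne_zero_of_mul h2⟩
  · rintro X Y hX hY h
    rw [← hii X hX.1, ← hii Y hY.1]
    exact congrArg _ h
  · rintro Y ⟨h1, h2⟩
    refine ⟨Y⁻¹, ⟨hinv Y h1, ?_⟩, hii Y h1⟩
    rw [key _ (hinv Y h1), hii Y h1]
    exact mul_ne_zero (hinv Y h1) h2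

lemma ncard_split {F : Type*} [Field F] [Fintype F] {n r : ℕ} (e : Fin r → Fin n) :
    {Y : Matrix (Fin n) (Fin n) F | Y.det ≠ 0 ∧ (1 - Y.submatrix e e).det ≠ 0}.ncard +
    {Y : Matrix (Fin n) (Fin n) F | Y.det ≠ 0 ∧ (1 - Y.submatrix e e).det = 0}.ncard =
    {Y : Matrix (Fin n) (Fin n) F | Y.det ≠ 0}.ncard := by
  rw [← Set.ncard_union_eq ?_ (Set.toFinite _) (Set.toFinite _)]
  · congr 1
    ext Y
    simp only [Set.mem_union, Set.mem_ofPred_eq]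
    tauto
  · rw [Set.disjoint_left]
    rintro Y h1 h2
    exact h1.2 h2.2

/-- Subtract `a` times the second column from the first. -/
def colOp {F : Type*} [Field F] {m : ℕ} (Y : Matrix (Fin (m+3)) (Fin (m+3)) F) (a : F) :
    Matrix (Fin (m+3)) (Fin (m+3)) F :=
  fun i j => if j = 0 then Y i 0 - a * Y i 1 else Y i j

lemma det_colOp {F : Type*} [Field F] {m : ℕ} (Y : Matrix (Fin (m+3)) (Fin (m+3)) F) (a : F) :
    (colOp Y a).det = Y.det := by
  have := Matrix.det_updateCol_add_smul_self Y (i := 0) (j := 1) (by simp) (-a)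
  rw [← this]
  congr 1
  ext i j
  simp only [colOp, Matrix.updateCol_apply]
  split_ifs <;> simp [sub_eq_add_neg]

lemma count_ne {F : Type*} [Field F] [Fintype F] {m : ℕ} :
    {Y : Matrix (Fin (m+3)) (Fin (m+3)) F | Y.det ≠ 0 ∧
      (1 - Y.submatrix ![0] ![0]).det = 0}.ncard ≠
    {Y : Matrix (Fin (m+3)) (Fin (m+3)) F | Y.det ≠ 0 ∧
      (1 - Y.submatrix ![0, 1] ![0, 1]).det = 0}.ncard := by
  classical
  have e1 : ∀ Y : Matrix (Fin (m+3)) (Fin (m+3)) F,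
      (1 - Y.submatrix ![0] ![0]).det = 0 ↔ Y 0 0 = 1 := by
    intro Y
    rw [Matrix.det_fin_one, Matrix.sub_apply, Matrix.submatrix_apply, sub_eq_zero]
    simp [eq_comm]
  have e2 : ∀ Y : Matrix (Fin (m+3)) (Fin (m+3)) F,
      (1 - Y.submatrix ![0, 1] ![0, 1]).det = (1 - Y 0 0) * (1 - Y 1 1) - Y 0 1 * Y 1 0 := by
    intro Y
    rw [Matrix.det_fin_two]
    simp only [Matrix.sub_apply, Matrix.submatrix_apply]
    simp
  simp only [e1, e2]
  intro hcard
  let f : Matrix (Fin (m+3)) (Fin (m+3)) F → Matrix (Fin (m+3)) (Fin (m+3)) F := fun Y =>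
    if Y 0 1 = 0 ∧ Y 1 1 = 1 then Y else colOp Y (Y 1 0)
  have hmaps : ∀ Y : Matrix (Fin (m+3)) (Fin (m+3)) F, Y.det ≠ 0 ∧ Y 0 0 = 1 →
      (f Y).det ≠ 0 ∧ (1 - f Y 0 0) * (1 - f Y 1 1) - f Y 0 1 * f Y 1 0 = 0 := by
    rintro Y ⟨h1, h2⟩
    simp only [f]
    split_ifs with h
    · exact ⟨h1, by rw [h.1, h2]; ring⟩
    · refine ⟨by rwa [det_colOp], ?_⟩
      simp [colOp, h2]
      ring
  have hinj : ∀ Y Z : Matrix (Fin (m+3)) (Fin (m+3)) F, Y 0 0 = 1 → Z 0 0 = 1 →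
      f Y = f Z → Y = Z := by
    intro Y Z hY hZ h
    have hcol : ∀ i j, f Y i j = f Z i j := fun i j => by rw [h]
    have h00 := hcol 0 0
    have h10 := hcol 1 0
    have h01 := hcol 0 1
    have h11 := hcol 1 1
    have hj : ∀ W : Matrix (Fin (m+3)) (Fin (m+3)) F, ∀ i j, j ≠ 0 → f W i j = W i j := by
      intro W i j hj
      simp only [f]
      split_ifs <;> simp [colOp, hj]
    rw [hj _ _ _ (by simp), hj _ _ _ (by simp)] at h01 h11
    by_cases hs : Y 0 1 = 0 ∧ Y 1 1 = 1
    · have hs' : Z 0 1 = 0 ∧ Z 1 1 = 1 := by rwa [← h01, ← h11]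
      simpa [f, hs, hs'] using h
    · have hs' : ¬ (Z 0 1 = 0 ∧ Z 1 1 = 1) := by rwa [← h01, ← h11]
      simp only [f, if_neg hs, if_neg hs'] at h00 h10 h
      simp only [colOp, if_true, hY, hZ, ← h01, ← h11] at h00 h10
      have hb : Y 1 0 = Z 1 0 := by
        by_contra hne
        apply hs
        have hb : Y 1 0 - Z 1 0 ≠ 0 := sub_ne_zero.2 hne
        constructor
        · apply mul_left_cancel₀ hb; linear_combination -h00
        · apply mul_left_cancel₀ hb; linear_combination -h10
      have hc : ∀ i j, colOp Y (Y 1 0) i j = colOp Z (Z 1 0) i j := fun i j => by rw [h]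
      ext i j
      have a1 := hc i 1
      have a2 := hc i j
      simp only [colOp] at a1 a2
      rw [if_neg (by simp), if_neg (by simp)] at a1
      by_cases hj0 : j = 0
      · subst hj0
        simp only [if_true] at a2
        rw [hb, a1] at a2
        linear_combination a2
      · simpa [hj0] using a2
  -- the missed matrix
  let P : Matrix (Fin (m+3)) (Fin (m+3)) F := (Equiv.swap (0 : Fin (m+3)) 2).permMatrix F
  have h02 : (0 : Fin (m+3)) ≠ 2 := by
    simp [Fin.ext_iff, Nat.mod_eq_of_lt (show 2 < m + 3 by omega)]
  have h12 : (1 : Fin (m+3)) ≠ 2 := by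
    simp [Fin.ext_iff, Nat.mod_eq_of_lt (show 2 < m + 3 by omega)]
  have hs1 : Equiv.swap (0 : Fin (m+3)) 2 1 = 1 := Equiv.swap_apply_of_ne_of_ne (by simp) h12
  have P00 : P 0 0 = 0 := by simp [P, PEquiv.toMatrix_apply, Equiv.toPEquiv_apply, h02.symm]
  have P01 : P 0 1 = 0 := by simp [P, PEquiv.toMatrix_apply, Equiv.toPEquiv_apply, h12.symm]
  have P10 : P 1 0 = 0 := by simp [P, PEquiv.toMatrix_apply, Equiv.toPEquiv_apply, hs1]
  have P11 : P 1 1 = 1 := by simp [P, PEquiv.toMatrix_apply, Equiv.toPEquiv_apply, hs1]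
  have hPdet : P.det ≠ 0 := by
    simp only [P, Matrix.det_permutation]
    rw [Equiv.Perm.sign_swap h02]; simp
  have hsurj := Set.surj_on_of_inj_on_of_ncard_le
    (s := {Y : Matrix (Fin (m+3)) (Fin (m+3)) F | Y.det ≠ 0 ∧ Y 0 0 = 1})
    (t := {Y : Matrix (Fin (m+3)) (Fin (m+3)) F | Y.det ≠ 0 ∧
      (1 - Y 0 0) * (1 - Y 1 1) - Y 0 1 * Y 1 0 = 0})
    (fun Y _ => f Y) (fun Y hY => hmaps Y hY)
    (fun Y Z hY hZ h => hinj Y Z hY.2 hZ.2 h) hcard.ge (Set.toFinite _)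
  obtain ⟨Y, hY, hYP⟩ := hsurj P ⟨hPdet, by rw [P01, P11]; ring⟩
  have hc : ∀ i j, P i j = f Y i j := fun i j => by rw [hYP]
  have c00 := hc 0 0
  have c01 := hc 0 1
  have c11 := hc 1 1
  rw [P00] at c00
  rw [P01] at c01
  rw [P11] at c11
  by_cases hs : Y 0 1 = 0 ∧ Y 1 1 = 1
  · simp only [f, if_pos hs, hY.2] at c00
    exact zero_ne_one c00
  · simp only [f, if_neg hs, colOp] at c01 c11
    rw [if_neg (by simp)] at c01 c11
    exact hs ⟨c01.symm, c11.symm⟩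

lemma projMat_nonadj {F : Type*} [Field F] {m r : ℕ} (e : Fin r → Fin (m+3))
    (he : ∀ i, e i ≠ 2) : ¬ (unitaryCayley F (m+3)).Adj 0 (projMat F e) := by
  rintro ⟨-, h⟩
  rw [zero_sub, IsUnit.neg_iff, Matrix.isUnit_iff_isUnit_det,
    Matrix.det_eq_zero_of_row_eq_zero 2] at h
  · exact not_isUnit_zero h
  · intro j
    simp [projMat, Matrix.mul_apply, Matrix.one_apply, fun i => (he i).symm]

lemma projMat_ne {F : Type*} [Field F] {m r : ℕ} (e : Fin (r+1) → Fin (m+3))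
    (he : Function.Injective e) : (0 : Matrix (Fin (m+3)) (Fin (m+3)) F) ≠ projMat F e := by
  intro h
  have := congrFun (congrFun h (e 0)) (e 0)
  simp [projMat, Matrix.mul_apply, Matrix.one_apply, he.eq_iff] at this

/-- For a finite field `F` with `q` elements and `n > 2`, the unitary Cayley graph
`Cay(M_n(F), GL_n(F))` is not strongly regular: there are no parameters `k, l, m`
making it strongly regular with parameters `(q ^ n ^ 2, k, l, m)`. -/
theorem unitaryCayley_not_isSRG (F : Type*) [Field F] [Fintype F]
    (n : ℕ) (hn : 2 < n) :
    letI : DecidableRel (unitaryCayley F n).Adj := Classical.decRel _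
    ¬ ∃ k l m : ℕ,
        (unitaryCayley F n).IsSRGWith ((Fintype.card F) ^ (n ^ 2)) k l m := by
  rintro ⟨k, l, c, h⟩
  obtain ⟨m, rfl⟩ : ∃ m, n = m + 3 := ⟨n - 3, by omega⟩
  let _ : DecidableRel (unitaryCayley F (m+3)).Adj := Classical.decRel _
  have h02 : (0 : Fin (m+3)) ≠ 2 := by
    simp [Fin.ext_iff, Nat.mod_eq_of_lt (show 2 < m + 3 by omega)]
  have h12 : (1 : Fin (m+3)) ≠ 2 := by
    simp [Fin.ext_iff, Nat.mod_eq_of_lt (show 2 < m + 3 by omega)]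
  have a1 := h.of_not_adj (projMat_ne (F := F) (![0] : Fin 1 → Fin (m+3))
    (by intro i j _; exact Subsingleton.elim (α := Fin 1) i j)) (projMat_nonadj _ (by intro i; fin_cases i; exact h02))
  have a2 := h.of_not_adj (projMat_ne (F := F) (![0, 1] : Fin 2 → Fin (m+3))
    (by intro i j; fin_cases i <;> fin_cases j <;> simp))
    (projMat_nonadj _ (by intro i; fin_cases i; exacts [h02, h12]))
  rw [← Nat.card_eq_fintype_card, Nat.card_coe_set_eq, ncard_common] at a1 a2
  have s1 := ncard_split (F := F) (![0] : Fin 1 → Fin (m+3))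
  have s2 := ncard_split (F := F) (![0, 1] : Fin 2 → Fin (m+3))
  apply count_ne (F := F) (m := m)
  omega
end

section
/- Let F be a finite field with q elements. The unitary Cayley graph Cay(M_2(F), GL_2(F)) is a strongly regular graph with parameters (q^4, q^4 − q^3 − q^2 + q, q^4 − 2q^3 − q^2 + 3q, q^4 − 2q^3 + q). -/
open Classical in
/-- Singularity indicator. -/
noncomputable def uSing {F : Type*} [Field F] (M : Matrix (Fin 2) (Fin 2) F) : ℤ :=
  if M.det = 0 then 1 else 0

section Helpers

variable {F : Type*} [Field F] [Fintype F]

open Classical in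
theorem u_sumM (f : Matrix (Fin 2) (Fin 2) F → ℤ) :
    ∑ M, f M = ∑ a, ∑ d, ∑ b, ∑ c, f !![a, b; c, d] := by
  let e : F × F × F × F ≃ Matrix (Fin 2) (Fin 2) F :=
    { toFun := fun x => !![x.1, x.2.2.1; x.2.2.2, x.2.1]
      invFun := fun M => (M 0 0, M 1 1, M 0 1, M 1 0)
      left_inv := fun x => by simp
      right_inv := fun M => by
        ext i j
        fin_cases i <;> fin_cases j <;> simp }
  rw [← e.sum_comp]
  simp only [Fintype.sum_prod_type]
  rfl

open Classical in
theorem u_inner (t : F) : ∑ b : F, ∑ c : F, (if b * c = t then (1 : ℤ) else 0) =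
    (Fintype.card F : ℤ) - 1 + if t = 0 then (Fintype.card F : ℤ) else 0 := by
  have h : ∀ b : F, ∑ c : F, (if b * c = t then (1 : ℤ) else 0) =
      1 + if b = 0 then ((if t = 0 then (Fintype.card F : ℤ) else 0) - 1) else 0 := by
    intro b
    by_cases hb : b = 0
    · subst hb
      by_cases ht : t = 0
      · simp [ht]
      · simp [ht, Ne.symm ht]
    · have : ∀ c : F, (b * c = t) ↔ c = b⁻¹ * t := by
        intro c
        constructor
        · rintro rfl; field_simp
        · rintro rfl; field_simp
      simp [this, hb]
  simp only [h, Finset.sum_add_distrib]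
  simp
  ring

open Classical in
theorem u_sing : ∑ M : Matrix (Fin 2) (Fin 2) F, uSing M =
    (Fintype.card F : ℤ) ^ 3 + (Fintype.card F : ℤ) ^ 2 - (Fintype.card F : ℤ) := by
  rw [u_sumM]
  have h : ∀ a d : F, ∑ b : F, ∑ c : F, uSing !![a, b; c, d] =
      (Fintype.card F : ℤ) - 1 + if a * d = 0 then (Fintype.card F : ℤ) else 0 := by
    intro a d
    rw [← u_inner]
    simp only [uSing, Matrix.det_fin_two_of, sub_eq_zero, eq_comm]
  simp only [h, Finset.sum_add_distrib]
  have h2 : ∑ a : F, ∑ d : F, (if a * d = 0 then (Fintype.card F : ℤ) else 0) =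
      Fintype.card F * ∑ a : F, ∑ d : F, (if a * d = 0 then (1 : ℤ) else 0) := by
    simp only [Finset.mul_sum, mul_ite, mul_one, mul_zero]
  rw [h2, u_inner]
  simp
  ring

/-- Number of `Y` with `Y` and `Y - D` both singular. -/
noncomputable def uT (D : Matrix (Fin 2) (Fin 2) F) : ℤ := by
  classical exact ∑ Y : Matrix (Fin 2) (Fin 2) F, uSing Y * uSing (Y - D)

theorem uT_mul (P D Q : Matrix (Fin 2) (Fin 2) F) (hP : P.det ≠ 0) (hQ : Q.det ≠ 0) :
    uT (P * D * Q) = uT D := by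
  classical
  have iP : IsUnit P.det := isUnit_iff_ne_zero.2 hP
  have iQ : IsUnit Q.det := isUnit_iff_ne_zero.2 hQ
  let e : Matrix (Fin 2) (Fin 2) F ≃ Matrix (Fin 2) (Fin 2) F :=
    { toFun := fun Y => P * Y * Q
      invFun := fun Y => P⁻¹ * Y * Q⁻¹
      left_inv := fun Y => by
        change P⁻¹ * (P * Y * Q) * Q⁻¹ = Y
        rw [Matrix.mul_assoc P, Matrix.nonsing_inv_mul_cancel_left _ _ iP,
          Matrix.mul_nonsing_inv_cancel_right _ _ iQ]
      right_inv := fun Y => by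
        change P * (P⁻¹ * Y * Q⁻¹) * Q = Y
        rw [Matrix.mul_assoc P⁻¹, Matrix.mul_nonsing_inv_cancel_left _ _ iP,
          Matrix.nonsing_inv_mul_cancel_right _ _ iQ] }
  have hs : ∀ Y, uSing (P * Y * Q) = uSing Y := by
    intro Y
    simp [uSing, Matrix.det_mul, hP, hQ]
  unfold uT
  rw [← e.sum_comp]
  refine Finset.sum_congr (by congr) fun Y _ => ?_
  change uSing (P * Y * Q) * uSing (P * Y * Q - P * D * Q) = _
  rw [← Matrix.sub_mul, ← Matrix.mul_sub, hs, hs]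

theorem uT_one : uT (1 : Matrix (Fin 2) (Fin 2) F) =
    (Fintype.card F : ℤ) ^ 2 + (Fintype.card F : ℤ) := by
  classical
  have h0 : uT (1 : Matrix (Fin 2) (Fin 2) F) =
      ∑ Y : Matrix (Fin 2) (Fin 2) F, uSing Y * uSing (Y - 1) := by
    unfold uT; congr!
  rw [h0, u_sumM]
  have h : ∀ a d b c : F, uSing !![a, b; c, d] * uSing (!![a, b; c, d] - 1) =
      if d = 1 - a then (if b * c = a * (1 - a) then (1 : ℤ) else 0) else 0 := by
    intro a d b c
    have e1 : (!![a, b; c, d] - 1).det = (a - 1) * (d - 1) - b * c := by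
      simp [Matrix.det_fin_two]
    simp only [uSing, e1, Matrix.det_fin_two_of]
    split_ifs <;> first | rfl | (exfalso; grind)
  have h1 : ∀ a d : F, ∑ b : F, ∑ c : F, uSing !![a, b; c, d] * uSing (!![a, b; c, d] - 1) =
      if d = 1 - a then ((Fintype.card F : ℤ) - 1 +
        if a * (1 - a) = 0 then (Fintype.card F : ℤ) else 0) else 0 := by
    intro a d
    simp only [h]
    split_ifs with h2 h3
    · rw [u_inner, if_pos h3]
    · rw [u_inner, if_neg h3]
    · simp
  simp only [h1, Finset.sum_ite_eq', Finset.sum_ite_eq, Finset.mem_univ, if_true,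
    Finset.sum_add_distrib]
  have h4 : ∀ a : F, (if a * (1 - a) = 0 then (Fintype.card F : ℤ) else 0) =
      (if a = 0 then (Fintype.card F : ℤ) else 0) +
      (if a = 1 then (Fintype.card F : ℤ) else 0) := by
    intro a
    by_cases ha : a = 0
    · simp [ha]
    · by_cases hb : a = 1
      · simp [hb]
      · have : (1 : F) - a ≠ 0 := fun h => hb (sub_eq_zero.1 h).symm
        simp [ha, hb, this]
  simp only [h4, Finset.sum_add_distrib]
  simp
  ring

theorem uT_diag (s t : F) (h0 : s * t = 0) (h1 : ¬ (s = 0 ∧ t = 0)) :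
    uT !![s, 0; 0, t] = 2 * (Fintype.card F : ℤ) ^ 2 - (Fintype.card F : ℤ) := by
  classical
  have h0' : uT !![s, 0; 0, t] =
      ∑ Y : Matrix (Fin 2) (Fin 2) F, uSing Y * uSing (Y - !![s, 0; 0, t]) := by
    unfold uT; congr!
  have e1 : ∀ a b c d : F,
      (!![a, b; c, d] - !![s, 0; 0, t]).det = (a - s) * (d - t) - b * c := by
    intro a b c d
    simp [Matrix.det_fin_two]
  rw [h0', u_sumM]
  by_cases hs : s = 0
  · have ht : t ≠ 0 := fun h => h1 ⟨hs, h⟩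
    have h : ∀ a d b c : F, uSing !![a, b; c, d] * uSing (!![a, b; c, d] - !![s, 0; 0, t]) =
        if a = 0 then (if b * c = 0 then (1 : ℤ) else 0) else 0 := by
      intro a d b c
      simp only [uSing, e1, Matrix.det_fin_two_of]
      split_ifs <;> first | rfl | (exfalso; grind)
    have h2 : ∀ a d : F, ∑ b : F, ∑ c : F,
        uSing !![a, b; c, d] * uSing (!![a, b; c, d] - !![s, 0; 0, t]) =
        if a = 0 then 2 * (Fintype.card F : ℤ) - 1 else 0 := by
      intro a d
      simp only [h]
      split_ifs with h3
      · rw [u_inner, if_pos rfl]; ring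
      · simp
    simp only [h2]
    rw [Finset.sum_comm]
    simp
    ring
  · have ht : t = 0 := (mul_eq_zero.1 h0).resolve_left hs
    have h : ∀ a d b c : F, uSing !![a, b; c, d] * uSing (!![a, b; c, d] - !![s, 0; 0, t]) =
        if d = 0 then (if b * c = 0 then (1 : ℤ) else 0) else 0 := by
      intro a d b c
      simp only [uSing, e1, Matrix.det_fin_two_of]
      split_ifs <;> first | rfl | (exfalso; grind)
    have h2 : ∀ a d : F, ∑ b : F, ∑ c : F,
        uSing !![a, b; c, d] * uSing (!![a, b; c, d] - !![s, 0; 0, t]) =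
        if d = 0 then 2 * (Fintype.card F : ℤ) - 1 else 0 := by
      intro a d
      simp only [h]
      split_ifs with h3
      · rw [u_inner, if_pos rfl]; ring
      · simp
    simp only [h2]
    simp
    ring

theorem uT_unit (D : Matrix (Fin 2) (Fin 2) F) (hD : D.det ≠ 0) :
    uT D = (Fintype.card F : ℤ) ^ 2 + (Fintype.card F : ℤ) := by
  have := uT_mul D 1 1 hD (by simp)
  rw [← uT_one, ← this]
  simp

theorem uT_sing (D : Matrix (Fin 2) (Fin 2) F) (hD : D.det = 0) (hD0 : D ≠ 0) :
    uT D = 2 * (Fintype.card F : ℤ) ^ 2 - (Fintype.card F : ℤ) := by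
  obtain ⟨L, L', d, h⟩ := Matrix.Pivot.exists_list_transvec_mul_diagonal_mul_list_transvec D
  have hd : Matrix.diagonal d = !![d 0, 0; 0, d 1] := by
    ext i j
    fin_cases i <;> fin_cases j <;> simp
  have p1 : ((L.map Matrix.TransvectionStruct.toMatrix).prod).det ≠ 0 := by simp
  have p2 : ((L'.map Matrix.TransvectionStruct.toMatrix).prod).det ≠ 0 := by simp
  rw [h, hd] at hD hD0
  rw [h, hd, uT_mul _ _ _ p1 p2]
  apply uT_diag
  · simpa [Matrix.det_mul] using hD
  · rintro ⟨h1, h2⟩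
    apply hD0
    have : !![d 0, 0; 0, d 1] = 0 := by
      ext i j
      fin_cases i <;> fin_cases j <;> simp [h1, h2]
    rw [this]; simp

theorem u_adj (A B : Matrix (Fin 2) (Fin 2) F) :
    (unitaryCayley F 2).Adj A B ↔ (A - B).det ≠ 0 := by
  change (A ≠ B ∧ IsUnit (A - B)) ↔ _
  rw [Matrix.isUnit_iff_isUnit_det, isUnit_iff_ne_zero]
  constructor
  · exact fun h => h.2
  · intro h
    refine ⟨?_, h⟩
    rintro rfl
    simp at h

theorem u_sing_shift [Fintype (Matrix (Fin 2) (Fin 2) F)] (A : Matrix (Fin 2) (Fin 2) F) :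
    ∑ Y : Matrix (Fin 2) (Fin 2) F, uSing (A - Y) =
    (Fintype.card F : ℤ) ^ 3 + (Fintype.card F : ℤ) ^ 2 - (Fintype.card F : ℤ) := by
  classical
  rw [← u_sing, ← (Equiv.subLeft A).sum_comp]
  simp only [Equiv.subLeft_apply, sub_sub_cancel]
  congr!

theorem u_card [Fintype (Matrix (Fin 2) (Fin 2) F)] :
    Fintype.card (Matrix (Fin 2) (Fin 2) F) = Fintype.card F ^ 4 := by
  rw [← Nat.card_eq_fintype_card, ← Nat.card_eq_fintype_card]
  unfold Matrix
  simp [Nat.card_fun, ← pow_mul]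

open Classical in
theorem u_deg [Fintype (Matrix (Fin 2) (Fin 2) F)] (A : Matrix (Fin 2) (Fin 2) F) :
    ((Finset.univ.filter fun B => (A - B).det ≠ 0).card : ℤ) =
    (Fintype.card F : ℤ) ^ 4 - (Fintype.card F : ℤ) ^ 3
          - (Fintype.card F : ℤ) ^ 2 + (Fintype.card F : ℤ) := by
  rw [Finset.card_filter]
  push_cast
  have : ∀ B, (if (A - B).det ≠ 0 then (1 : ℤ) else 0) = 1 - uSing (A - B) := by
    intro B
    unfold uSing
    split_ifs <;> simp_all
  simp only [this, Finset.sum_sub_distrib, u_sing_shift]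
  simp [u_card]
  ring

open Classical in
theorem u_common [Fintype (Matrix (Fin 2) (Fin 2) F)] (A B : Matrix (Fin 2) (Fin 2) F) :
    ((Finset.univ.filter fun C => (A - C).det ≠ 0 ∧ (B - C).det ≠ 0).card : ℤ) =
    (Fintype.card F : ℤ) ^ 4 - 2 * (Fintype.card F : ℤ) ^ 3
          - 2 * (Fintype.card F : ℤ) ^ 2 + 2 * (Fintype.card F : ℤ) + uT (A - B) := by
  have hT : uT (A - B) = ∑ C : Matrix (Fin 2) (Fin 2) F, uSing (A - C) * uSing (B - C) := by
    have : uT (A - B) = ∑ Y : Matrix (Fin 2) (Fin 2) F, uSing Y * uSing (Y - (A - B)) := by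
      unfold uT; congr!
    rw [this, ← (Equiv.subLeft A).sum_comp]
    refine Finset.sum_congr rfl fun C _ => ?_
    simp only [Equiv.subLeft_apply]
    congr 2
    abel
  rw [Finset.card_filter]
  push_cast
  have : ∀ C, (if (A - C).det ≠ 0 ∧ (B - C).det ≠ 0 then (1 : ℤ) else 0) =
      1 - uSing (A - C) - uSing (B - C) + uSing (A - C) * uSing (B - C) := by
    intro C
    unfold uSing
    split_ifs <;> simp_all
  simp only [this, Finset.sum_sub_distrib, Finset.sum_add_distrib, u_sing_shift, ← hT]
  simp [u_card]
  ring

theorem u_common' (A B : Matrix (Fin 2) (Fin 2) F)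
    [Fintype ((unitaryCayley F 2).commonNeighbors A B)] :
    (Fintype.card ((unitaryCayley F 2).commonNeighbors A B) : ℤ) =
    (Fintype.card F : ℤ) ^ 4 - 2 * (Fintype.card F : ℤ) ^ 3
          - 2 * (Fintype.card F : ℤ) ^ 2 + 2 * (Fintype.card F : ℤ) + uT (A - B) := by
  classical
  rw [← u_common A B]
  norm_cast
  apply Fintype.card_of_subtype
  intro C
  simp [SimpleGraph.mem_commonNeighbors, u_adj]

end Helpers

/-- For a finite field `F` with `q` elements, `Cay(M_2(F), GL_2(F))` is strongly regular
with parameters `(q^4, q^4 - q^3 - q^2 + q, q^4 - 2q^3 - q^2 + 3q, q^4 - 2q^3 + q)`. -/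
theorem unitaryCayley_two_isSRG (F : Type*) [Field F] [Fintype F] :
    letI : DecidableRel (unitaryCayley F 2).Adj := Classical.decRel _
    ∃ k l m : ℕ,
      (unitaryCayley F 2).IsSRGWith ((Fintype.card F) ^ 4) k l m ∧
      (k : ℤ) = (Fintype.card F : ℤ) ^ 4 - (Fintype.card F : ℤ) ^ 3
          - (Fintype.card F : ℤ) ^ 2 + (Fintype.card F : ℤ) ∧
      (l : ℤ) = (Fintype.card F : ℤ) ^ 4 - 2 * (Fintype.card F : ℤ) ^ 3
          - (Fintype.card F : ℤ) ^ 2 + 3 * (Fintype.card F : ℤ) ∧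
      (m : ℤ) = (Fintype.card F : ℤ) ^ 4 - 2 * (Fintype.card F : ℤ) ^ 3
          + (Fintype.card F : ℤ) := by
  letI : DecidableRel (unitaryCayley F 2).Adj := Classical.decRel _
  have hq : (1 : ℤ) < Fintype.card F := by exact_mod_cast Fintype.one_lt_card
  set q : ℤ := (Fintype.card F : ℤ) with hqd
  have hk : 0 ≤ q ^ 4 - q ^ 3 - q ^ 2 + q := by
    have : q ^ 4 - q ^ 3 - q ^ 2 + q = q * ((q - 1) ^ 2 * (q + 1)) := by ring
    rw [this]; positivity
  have hl : 0 ≤ q ^ 4 - 2 * q ^ 3 - q ^ 2 + 3 * q := by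
    have : q ^ 4 - 2 * q ^ 3 - q ^ 2 + 3 * q = q * ((q - 2) * (q ^ 2 - 1) + 1) := by ring
    rw [this]
    have h1 : 0 ≤ q - 2 := by linarith
    have h2 : 0 ≤ q ^ 2 - 1 := by nlinarith
    positivity
  have hm : 0 ≤ q ^ 4 - 2 * q ^ 3 + q := by
    have : q ^ 4 - 2 * q ^ 3 + q = q * ((q - 2) * q ^ 2 + 1) := by ring
    rw [this]
    have h1 : 0 ≤ q - 2 := by linarith
    positivity
  refine ⟨_, _, _, ⟨u_card, ?_, ?_, ?_⟩, Int.toNat_of_nonneg hk, Int.toNat_of_nonneg hl,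
    Int.toNat_of_nonneg hm⟩
  · intro A
    zify
    rw [Int.toNat_of_nonneg hk, hqd, ← u_deg A, ← SimpleGraph.card_neighborFinset_eq_degree]
    norm_cast
    congr 1
    ext B
    simp [u_adj]
  · intro A B h
    rw [u_adj] at h
    zify
    rw [Int.toNat_of_nonneg hl, u_common', uT_unit _ h]
    ring
  · intro A B hne h
    rw [u_adj, not_not] at h
    zify
    rw [Int.toNat_of_nonneg hm, u_common', uT_sing _ h (sub_ne_zero.2 hne)]
    ring
end

section
/- Let F be a finite field, n a positive integer, and let A and B be two non-adjacent vertices of the unitary Cayley graph Cay(M_n(F), GL_n(F)) (i.e., A ≠ B and A − B is not invertible). Then the number of common neighbors of A and B equals the cardinality of the set ((D_r + GL_n(F)) ∩ GL_n(F)), where r = rank(A − B) and D_r denotes the block diagonal n×n matrix with the r×r identity in the upper left corner and zeros elsewhere; here D_r + GL_n(F) denotes the set of matrices D_r + X with X invertible. -/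
theorem exists_equivalence_to_normal {F : Type*} [Field F] (n : ℕ)
    (M : Matrix (Fin n) (Fin n) F) :
    ∃ ψ : Matrix (Fin n) (Fin n) F → Matrix (Fin n) (Fin n) F,
      Function.Bijective ψ ∧ (∀ X Y, ψ (X - Y) = ψ X - ψ Y) ∧ (∀ X, IsUnit (ψ X) ↔ IsUnit X) ∧
      ψ M = (Matrix.of fun i j : Fin n => if i = j ∧ (i : ℕ) < M.rank then (1 : F) else 0) := by
  obtain ⟨V, U, e, hV, hU, h⟩ := Matrix.exists_rank_normal_form M
  have hr : M.rank ≤ n := by simpa using M.rank_le_card_width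
  let f : Fin n ≃ Fin M.rank ⊕ Fin (Fintype.card (Fin n) - M.rank) :=
    (finCongr (by simp; omega)).trans finSumFinEquiv.symm
  let σ : Fin n ≃ Fin n := f.trans e.symm
  have hsub : ∀ X Y, (V * (X - Y) * U).submatrix σ σ
      = (V * X * U).submatrix σ σ - (V * Y * U).submatrix σ σ := by
    intro X Y
    rw [mul_sub, sub_mul]; rfl
  refine ⟨fun X => (V * X * U).submatrix σ σ, ⟨?_, ?_⟩, hsub, ?_, ?_⟩
  · intro X Y hXY
    have h1 : V * X * U = V * Y * U := by
      ext i j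
      simpa using congrFun (congrFun hXY (σ.symm i)) (σ.symm j)
    exact hV.mul_left_cancel (hU.mul_right_cancel h1)
  · intro Y
    obtain ⟨v, rfl⟩ := hV
    obtain ⟨u, rfl⟩ := hU
    refine ⟨(v⁻¹).val * Y.submatrix σ.symm σ.symm * (u⁻¹).val, ?_⟩
    have : v.val * ((v⁻¹).val * Y.submatrix σ.symm σ.symm * (u⁻¹).val) * u.val
        = Y.submatrix σ.symm σ.symm := by
      simp only [mul_assoc, Units.inv_mul, mul_one]
      simp only [← mul_assoc, Units.mul_inv, one_mul]
    simp only [this]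
    ext i j
    simp
  · intro X
    simp only [Matrix.isUnit_submatrix_equiv]
    obtain ⟨v, rfl⟩ := hV
    obtain ⟨u, rfl⟩ := hU
    simp
  · have h2 : (V * M * U).submatrix σ σ = (Matrix.fromBlocks 1 0 0 0).submatrix f f := by
      rw [h]; ext i j; simp [σ]
    simp only [h2]
    have key : ∀ a b, (Matrix.fromBlocks 1 0 0 0 : Matrix (Fin M.rank ⊕
        Fin (Fintype.card (Fin n) - M.rank)) _ F) a b =
        if f.symm a = f.symm b ∧ (f.symm a : ℕ) < M.rank then (1 : F) else 0 := by
      intro a b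
      simp only [f.symm.injective.eq_iff]
      rcases a with a | a <;> rcases b with b | b <;> simp [f, Matrix.one_apply]
    ext i j
    simp [key]

/-- If `A` and `B` are non-adjacent vertices of `Cay(M_n(F), GL_n(F))` (i.e. `A ≠ B` and
`A - B` is not invertible), then the number of their common neighbors equals
`|(D_r + GL_n(F)) ∩ GL_n(F)|`, where `r = rank (A - B)` and `D_r` is the block-diagonal
matrix with `I_r` in the upper-left corner and zeros elsewhere. -/
theorem card_commonNeighbors_of_not_adj (F : Type*) [Field F] [Fintype F]
    (n : ℕ) (hn : 0 < n) (A B : Matrix (Fin n) (Fin n) F)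
    (hne : A ≠ B) (hnu : ¬ IsUnit (A - B)) :
    ((unitaryCayley F n).commonNeighbors A B).ncard =
      ((fun X => (Matrix.of fun i j : Fin n =>
            if i = j ∧ (i : ℕ) < (A - B).rank then (1 : F) else 0) + X) ''
          {X : Matrix (Fin n) (Fin n) F | IsUnit X} ∩
        {X : Matrix (Fin n) (Fin n) F | IsUnit X}).ncard := by
  haveI : Nonempty (Fin n) := ⟨⟨0, hn⟩⟩
  obtain ⟨ψ, hbij, hsub, hunit, hM⟩ := exists_equivalence_to_normal n (A - B)
  rw [← hM]
  have hadj : ∀ X Y, (unitaryCayley F n).Adj X Y ↔ IsUnit (X - Y) := by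
    intro X Y
    refine ⟨fun h => h.2, fun h => ⟨?_, h⟩⟩
    rintro rfl
    simp at h
  refine Set.ncard_congr (fun C _ => ψ (A - C)) ?_ ?_ ?_
  · rintro C hC
    rw [SimpleGraph.mem_commonNeighbors, hadj, hadj] at hC
    refine ⟨⟨ψ (B - C), (hunit _).2 hC.2, ?_⟩, (hunit _).2 hC.1⟩
    have : B - C = (A - C) - (A - B) := by abel
    simp only [this, hsub (A - C) (A - B)]
    abel
  · intro C C' _ _ h
    exact sub_right_injective (hbij.1 h)
  · rintro Y ⟨⟨X, hX, rfl⟩, hY⟩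
    obtain ⟨Z, hZ⟩ := hbij.2 (ψ (A - B) + X)
    refine ⟨A - Z, ?_, ?_⟩
    · rw [SimpleGraph.mem_commonNeighbors, hadj, hadj]
      have h1 : A - (A - Z) = Z := by abel
      have h2 : B - (A - Z) = Z - (A - B) := by abel
      rw [h1, h2, ← hunit, ← hunit (Z - (A - B)), hsub Z (A - B), hZ]
      refine ⟨hY, ?_⟩
      simpa using hX
    · have h1 : A - (A - Z) = Z := by abel
      simp only [h1, hZ]
end

section
/- Let F be a finite field with q elements and n ≥ 1 an integer, and let E_11 denote the n×n matrix with 1 in position (1,1) and 0 elsewhere. Then the number of matrices A ∈ M_n(F) such that both A and A − E_11 are invertible equals (q^n − q^(n−1) − 1) · ∏_{k=1}^{n−1} (q^n − q^k). Equivalently, |(E_11 + GL_n(F)) ∩ GL_n(F)| = (q^n − q^(n−1) − 1) · ∏_{k=1}^{n−1} (q^n − q^k). -/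
open Matrix in
theorem aux_exists_col {F : Type*} [Field F] {m : ℕ} (v : Fin (m+1) → F) (hv : v ≠ 0) :
    ∃ M : Matrix (Fin (m+1)) (Fin (m+1)) F, IsUnit M.det ∧ M *ᵥ (Pi.single 0 1) = v := by
  obtain ⟨j, hj⟩ := Function.ne_iff.mp hv
  refine ⟨((1 : Matrix _ _ F).updateCol j v).submatrix id (Equiv.swap 0 j), ?_, ?_⟩
  · rw [det_permute', ← cramer_apply, cramer_one]
    simp only [isUnit_iff_ne_zero]
    refine mul_ne_zero ?_ hj
    rcases Int.units_eq_one_or (Equiv.Perm.sign (Equiv.swap 0 j)) with h | h <;> simp [h]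
  · ext i
    simp

open Matrix in
theorem aux_fiber {F : Type*} [Field F] [Fintype F] [DecidableEq F] {m : ℕ}
    (v : Fin (m+1) → F) (hv : v ≠ 0) :
    (Finset.univ.filter fun A : Matrix (Fin (m+1)) (Fin (m+1)) F =>
      IsUnit A.det ∧ A *ᵥ (Pi.single 0 1) = v).card =
    (Finset.univ.filter fun A : Matrix (Fin (m+1)) (Fin (m+1)) F =>
      IsUnit A.det ∧ A *ᵥ (Pi.single 0 1) = Pi.single 0 1).card := by
  obtain ⟨M, hM, hMv⟩ := aux_exists_col v hv
  refine Finset.card_bij' (fun A _ => M⁻¹ * A) (fun A _ => M * A) ?_ ?_ ?_ ?_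
  · intro A hA
    simp only [Finset.mem_filter, Finset.mem_univ, true_and] at hA ⊢
    refine ⟨?_, ?_⟩
    · rw [det_mul]
      exact (M.isUnit_nonsing_inv_det hM).mul hA.1
    · rw [← mulVec_mulVec, hA.2, ← hMv, mulVec_mulVec, nonsing_inv_mul _ hM, one_mulVec]
  · intro A hA
    simp only [Finset.mem_filter, Finset.mem_univ, true_and] at hA ⊢
    refine ⟨?_, ?_⟩
    · rw [det_mul]
      exact hM.mul hA.1
    · rw [← mulVec_mulVec, hA.2, hMv]
  · intro A _
    exact mul_nonsing_inv_cancel_left _ _ hM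
  · intro A _
    exact nonsing_inv_mul_cancel_left _ _ hM

open Matrix in
theorem aux_count {F : Type*} [Field F] [Fintype F] [DecidableEq F] {m : ℕ}
    (T : Finset (Fin (m+1) → F)) (hT : 0 ∉ T) :
    (Finset.univ.filter fun A : Matrix (Fin (m+1)) (Fin (m+1)) F =>
      IsUnit A.det ∧ A *ᵥ (Pi.single 0 1) ∈ T).card = T.card *
    (Finset.univ.filter fun A : Matrix (Fin (m+1)) (Fin (m+1)) F =>
      IsUnit A.det ∧ A *ᵥ (Pi.single 0 1) = Pi.single 0 1).card := by
  rw [Finset.card_eq_sum_card_fiberwise (t := T) (f := fun A => A *ᵥ (Pi.single 0 1))]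
  · rw [← smul_eq_mul, ← Finset.sum_const]
    refine Finset.sum_congr rfl fun v hv => ?_
    rw [← aux_fiber v (fun h => hT (h ▸ hv)), Finset.filter_filter]
    congr 1
    ext A
    simp only [Finset.mem_filter, Finset.mem_univ, true_and]
    constructor
    · rintro ⟨⟨h, _⟩, h2⟩
      exact ⟨h, h2⟩
    · rintro ⟨h, h2⟩
      exact ⟨⟨h, h2 ▸ hv⟩, h2⟩
  · intro A hA
    simp at hA
    simpa using hA.2

open Matrix in
theorem aux_unit {F : Type*} [Field F] {m : ℕ} (A : Matrix (Fin (m+1)) (Fin (m+1)) F)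
    (hA : IsUnit A.det) :
    IsUnit (A - Matrix.single 0 0 (1 : F)) ↔ A⁻¹ 0 0 ≠ 1 := by
  have h1 : A - Matrix.single 0 0 (1 : F) =
      A + replicateCol Unit (Pi.single 0 (-1) : Fin (m+1) → F) * replicateRow Unit (Pi.single 0 1 : Fin (m+1) → F) := by
    rw [sub_eq_add_neg]
    congr 1
    ext i j
    by_cases hi : i = 0 <;> by_cases hj : j = 0 <;>
      simp [Matrix.mul_apply, Matrix.single_apply, Pi.single_apply, hi, hj, eq_comm]
  rw [isUnit_iff_isUnit_det, h1, det_add_replicateCol_mul_replicateRow hA, IsUnit.mul_iff]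
  have h2 : (1 + replicateRow Unit (Pi.single 0 1 : Fin (m+1) → F) * A⁻¹ * replicateCol Unit (Pi.single 0 (-1) : Fin (m+1) → F)).det
      = 1 - A⁻¹ 0 0 := by
    simp [Matrix.mul_apply, Pi.single_apply, sub_eq_add_neg]
  rw [h2, isUnit_iff_ne_zero (a := 1 - _), sub_ne_zero]
  exact ⟨fun h => h.2.symm, fun h => ⟨hA, h.symm⟩⟩

open Matrix in
theorem aux_GL {F : Type*} [Field F] [Fintype F] [DecidableEq F] (n : ℕ) :
    (Finset.univ.filter fun A : Matrix (Fin n) (Fin n) F => IsUnit A.det).card =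
      ∏ i : Fin n, (Fintype.card F ^ n - Fintype.card F ^ (i : ℕ)) := by
  rw [← card_GL_field, ← Fintype.card_subtype, ← Nat.card_eq_fintype_card]
  refine Nat.card_congr ?_
  exact
    { toFun := fun A => GeneralLinearGroup.mk'' A.1 A.2
      invFun := fun g => ⟨g.1, (isUnit_iff_isUnit_det _).1 g.isUnit⟩
      left_inv := fun A => by ext; rfl
      right_inv := fun g => by ext; rfl }

/-- For a finite field `F` with `q` elements and `n ≥ 1`, the number of matrices `A`
such that both `A` and `A - E₁₁` are invertible (equivalently,
`|(E₁₁ + GL_n(F)) ∩ GL_n(F)|`) equals `(q^n - q^(n-1) - 1) · ∏_{k=1}^{n-1} (q^n - q^k)`. -/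
theorem card_unit_and_unit_sub_stdBasisMatrix (F : Type*) [Field F] [Fintype F]
    (n : ℕ) (hn : 0 < n) :
    (({A : Matrix (Fin n) (Fin n) F |
        IsUnit A ∧ IsUnit (A - Matrix.single ⟨0, hn⟩ ⟨0, hn⟩ (1 : F))}.ncard : ℤ)) =
      ((Fintype.card F : ℤ) ^ n - (Fintype.card F : ℤ) ^ (n - 1) - 1) *
        ∏ k ∈ Finset.Icc 1 (n - 1), ((Fintype.card F : ℤ) ^ n - (Fintype.card F : ℤ) ^ k) := by
  classical
  obtain ⟨m, rfl⟩ : ∃ m, n = m + 1 := ⟨n - 1, by omega⟩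
  have hq : 1 < Fintype.card F := Fintype.one_lt_card
  set c := (Finset.univ.filter fun A : Matrix (Fin (m+1)) (Fin (m+1)) F =>
      IsUnit A.det ∧ A.mulVec (Pi.single 0 1) = Pi.single 0 1).card with hc
  have hpos : 1 < Fintype.card F ^ (m+1) := Nat.one_lt_pow (by omega) hq
  -- all invertible matrices
  have hall : (Finset.univ.filter fun A : Matrix (Fin (m+1)) (Fin (m+1)) F =>
      IsUnit A.det).card = (Fintype.card F ^ (m+1) - 1) * c := by
    have h := aux_count (F := F) (m := m) (Finset.univ.erase 0) (by simp)
    rw [Finset.card_erase_of_mem (Finset.mem_univ _), Finset.card_univ, Fintype.card_fun,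
      Fintype.card_fin] at h
    rw [hc, ← h]
    congr 1
    ext A
    simp only [Finset.mem_filter, Finset.mem_univ, true_and, Finset.mem_erase, and_true]
    refine ⟨fun hA => ⟨hA, fun h0 => ?_⟩, fun hA => hA.1⟩
    have := congrArg (A⁻¹.mulVec) h0
    rw [Matrix.mulVec_mulVec, Matrix.nonsing_inv_mul _ hA, Matrix.one_mulVec,
      Matrix.mulVec_zero] at this
    simpa using congrFun this 0
  have hcP : (c : ℤ) = ∏ k ∈ Finset.Icc 1 m,
      ((Fintype.card F : ℤ) ^ (m+1) - (Fintype.card F : ℤ) ^ k) := by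
    have h := hall
    rw [aux_GL, Fin.prod_univ_succ] at h
    simp only [Fin.val_zero, pow_zero] at h
    have hcancel := Nat.eq_of_mul_eq_mul_left (by omega) h
    rw [← hcancel, Nat.cast_prod, ← Finset.Ico_add_one_right_eq_Icc, Finset.prod_Ico_eq_prod_range,
      Finset.prod_range]
    refine Finset.prod_congr (by simp) fun i _ => ?_
    rw [Nat.cast_sub (Nat.pow_le_pow_right (by omega) (by simpa using i.2.le))]
    simp [add_comm]
  -- those with top left entry 1
  have hone : (Finset.univ.filter fun A : Matrix (Fin (m+1)) (Fin (m+1)) F =>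
      IsUnit A.det ∧ A 0 0 = 1).card = Fintype.card F ^ m * c := by
    have h := aux_count (F := F) (m := m) (Finset.univ.filter fun v => v 0 = 1) (by simp)
    have h2 : (Finset.univ.filter fun v : Fin (m+1) → F => v 0 = 1).card
        = Fintype.card F ^ m := by
      have : Fintype.card (Fin m → F) = Fintype.card F ^ m := by simp
      rw [← this, ← Finset.card_univ]
      refine Finset.card_bij' (fun v _ => Fin.tail v) (fun w _ => Fin.cons 1 w) ?_ ?_ ?_ ?_
      · simp
      · simp
      · intro v hv
        simp only [Finset.mem_filter, Finset.mem_univ, true_and] at hv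
        rw [← hv]
        exact Fin.cons_self_tail v
      · intro w _
        simp
    rw [h2] at h
    rw [hc, ← h]
    congr 1
    ext A
    simp
  have hinv : (Finset.univ.filter fun A : Matrix (Fin (m+1)) (Fin (m+1)) F =>
      IsUnit A.det ∧ A⁻¹ 0 0 = 1).card = Fintype.card F ^ m * c := by
    rw [← hone]
    refine Finset.card_bij' (fun A _ => A⁻¹) (fun A _ => A⁻¹) ?_ ?_ ?_ ?_
    · intro A hA
      simp only [Finset.mem_filter, Finset.mem_univ, true_and] at hA ⊢
      exact ⟨A.isUnit_nonsing_inv_det hA.1, hA.2⟩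
    · intro A hA
      simp only [Finset.mem_filter, Finset.mem_univ, true_and] at hA ⊢
      exact ⟨A.isUnit_nonsing_inv_det hA.1, by rw [Matrix.nonsing_inv_nonsing_inv _ hA.1, hA.2]⟩
    · intro A hA
      simp only [Finset.mem_filter, Finset.mem_univ, true_and] at hA
      exact Matrix.nonsing_inv_nonsing_inv _ hA.1
    · intro A hA
      simp only [Finset.mem_filter, Finset.mem_univ, true_and] at hA
      exact Matrix.nonsing_inv_nonsing_inv _ hA.1
  have hset : {A : Matrix (Fin (m+1)) (Fin (m+1)) F |
        IsUnit A ∧ IsUnit (A - Matrix.single ⟨0, hn⟩ ⟨0, hn⟩ (1 : F))} =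
      ((Finset.univ.filter fun A : Matrix (Fin (m+1)) (Fin (m+1)) F =>
        IsUnit A.det ∧ ¬ A⁻¹ 0 0 = 1 : Finset _) : Set (Matrix (Fin (m+1)) (Fin (m+1)) F)) := by
    ext A
    simp only [Set.mem_setOf_eq, Finset.coe_filter, Finset.mem_univ, true_and]
    rw [Matrix.isUnit_iff_isUnit_det A]
    exact and_congr_right fun h => aux_unit A h
  rw [hset, Set.ncard_coe_finset]
  have hsum := Finset.card_filter_add_card_filter_not
    (s := Finset.univ.filter fun A : Matrix (Fin (m+1)) (Fin (m+1)) F => IsUnit A.det)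
    (fun A => A⁻¹ 0 0 = 1)
  rw [Finset.filter_filter, Finset.filter_filter, hinv, hall] at hsum
  have hz := congrArg (Nat.cast : ℕ → ℤ) hsum
  push_cast [Nat.cast_sub hpos.le] at hz
  rw [Nat.add_sub_cancel, ← hcP]
  linear_combination hz
end

section
/- Let F be a finite field with q elements, n ≥ 2 an integer, and let D = diag{1,1,0,…,0} be the n×n diagonal matrix whose first two diagonal entries are 1 and all other entries 0. Then the number of matrices A ∈ M_n(F) such that both A and A − D are invertible equals (q^(2n) − q^(2n−1) − q^(2n−2) + q^(2n−3) + q^(n−1) − q^(n+1) + q) · ∏_{k=2}^{n−1} (q^n − q^k). Equivalently, |(D + GL_n(F)) ∩ GL_n(F)| equals this quantity. -/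
open Finset in
open Classical in
theorem cu_fiber {F V W : Type*} [Field F] [Fintype F] [AddCommGroup V] [Module F V] [Fintype V]
    [AddCommGroup W] [Module F W] [Fintype W] (f : V →ₗ[F] W) (hf : Function.Surjective f) (c : W) :
    (#{v : V | f v = c} : ℤ) * Fintype.card W = Fintype.card V := by
  have h := Finset.card_eq_sum_card_fiberwise (f := f) (s := Finset.univ) (t := Finset.univ)
    (by intro x; simp)
  have h2 : ∀ b ∈ (Finset.univ : Finset W), #{v : V | f v = b} = #{v : V | f v = c} := fun b _ =>
    AddMonoidHom.card_fiber_eq_of_mem_range f (hf b) (hf c)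
  rw [Finset.sum_congr rfl h2] at h
  simp only [Finset.sum_const, smul_eq_mul, Finset.card_univ] at h
  rw [h]; push_cast; ring

open Finset in
open Classical in
theorem cu_span {F V : Type*} [Field F] [Fintype F] [AddCommGroup V] [Module F V] [Fintype V]
    {N : ℕ} (u : Fin N → V) (hu : LinearIndependent F u) :
    (∑ x : V, if x ∉ Submodule.span F (Set.range u) then (1 : ℤ) else 0) =
      (Fintype.card F : ℤ) ^ Module.finrank F V - (Fintype.card F : ℤ) ^ N := by
  have h1 : Fintype.card (Submodule.span F (Set.range u)) = Fintype.card F ^ N := by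
    rw [Module.card_eq_pow_finrank (K := F), finrank_span_eq_card hu, Fintype.card_fin]
  have h2 : Fintype.card V = Fintype.card F ^ Module.finrank F V := Module.card_eq_pow_finrank
  have h3 : (∑ x : V, if x ∈ Submodule.span F (Set.range u) then (1 : ℤ) else 0) =
      (Fintype.card F : ℤ) ^ N := by
    rw [Finset.sum_boole, ← Fintype.card_subtype]
    exact_mod_cast h1
  have h4 : ∀ x : V, (if x ∉ Submodule.span F (Set.range u) then (1 : ℤ) else 0) =
      1 - if x ∈ Submodule.span F (Set.range u) then (1 : ℤ) else 0 := by
    intro x; split_ifs <;> simp_all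
  simp_rw [h4]
  rw [Finset.sum_sub_distrib, h3]
  simp [h2]

open Finset in
open Classical in
theorem cu_ext {F V : Type*} [Field F] [Fintype F] [AddCommGroup V] [Module F V] [Fintype V]
    (k : ℕ) (P : (Fin k → V) → Prop) (j : ℕ) :
    (∑ v : Fin (k + j) → V,
      if LinearIndependent F v ∧ P (fun i => v (Fin.castAdd j i)) then (1 : ℤ) else 0) =
    (∑ v : Fin k → V, if LinearIndependent F v ∧ P v then (1 : ℤ) else 0) *
      ∏ i ∈ Finset.range j,
        ((Fintype.card F : ℤ) ^ Module.finrank F V - (Fintype.card F : ℤ) ^ (k + i)) := by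
  induction j with
  | zero => simp
  | succ j ih =>
    rw [Finset.prod_range_succ, ← mul_assoc, ← ih]
    change (∑ v : Fin ((k + j) + 1) → V, _) = _
    rw [← Equiv.sum_comp (Fin.snocEquiv (fun _ : Fin ((k + j) + 1) => V)),
      Fintype.sum_prod_type_right, Finset.sum_mul]
    refine Finset.sum_congr rfl fun v _ => ?_
    have h1 : ∀ x : V, (fun i : Fin k => (Fin.snocEquiv (fun _ : Fin ((k + j) + 1) => V)) (x, v)
        (Fin.castAdd (j + 1) i)) = fun i => v (Fin.castAdd j i) := by
      intro x; funext i
      exact Fin.snoc_castSucc (α := fun _ => V) x v (Fin.castAdd j i)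
    have h2 : ∀ x : V, LinearIndependent F ((Fin.snocEquiv (fun _ : Fin ((k + j) + 1) => V)) (x, v))
        ↔ LinearIndependent F v ∧ x ∉ Submodule.span F (Set.range v) := by
      intro x; exact linearIndependent_finSnoc
    by_cases hv : LinearIndependent F v ∧ P (fun i => v (Fin.castAdd j i))
    · rw [if_pos hv, one_mul, ← cu_span v hv.1]
      refine Finset.sum_congr rfl fun x _ => ?_
      refine if_congr ?_ rfl rfl
      erw [h1 x, h2 x]
      tauto
    · rw [if_neg hv, zero_mul]
      refine Finset.sum_eq_zero fun x _ => if_neg ?_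
      erw [h1 x, h2 x]
      tauto

theorem cu_det {F : Type*} [Field F] (m : ℕ) (B : Matrix (Fin (2 + m)) (Fin (2 + m)) F) :
    (1 - Matrix.diagonal (fun i : Fin (2 + m) => if (i : ℕ) < 2 then (1 : F) else 0) * B).det =
      (1 - B (Fin.castAdd m 0) (Fin.castAdd m 0)) * (1 - B (Fin.castAdd m 1) (Fin.castAdd m 1))
        - B (Fin.castAdd m 0) (Fin.castAdd m 1) * B (Fin.castAdd m 1) (Fin.castAdd m 0) := by
  have h : Matrix.diagonal (fun i : Fin (2 + m) => if (i : ℕ) < 2 then (1 : F) else 0) =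
      (1 : Matrix (Fin (2 + m)) (Fin (2 + m)) F).submatrix id (Fin.castAdd m) *
      (1 : Matrix (Fin (2 + m)) (Fin (2 + m)) F).submatrix (Fin.castAdd m) id := by
    ext i j
    rw [Matrix.mul_apply, Fin.sum_univ_two]
    simp only [Matrix.submatrix_apply, Matrix.one_apply, Matrix.diagonal_apply, Fin.ext_iff, id,
      Fin.val_castAdd, Fin.val_zero, Fin.val_one]
    split_ifs <;> first | omega | simp
  rw [h, Matrix.mul_assoc, Matrix.det_one_sub_mul_comm, Matrix.det_fin_two]
  have h2 : (1 : Matrix (Fin (2 + m)) (Fin (2 + m)) F).submatrix (Fin.castAdd m) id * B *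
      (1 : Matrix (Fin (2 + m)) (Fin (2 + m)) F).submatrix id (Fin.castAdd m) =
      B.submatrix (Fin.castAdd m) (Fin.castAdd m) := by
    ext i j
    simp [Matrix.mul_apply, Matrix.one_apply]
  rw [h2]
  simp

/-- The condition on the first two rows. -/
def CuP {F : Type*} [Field F] (m : ℕ) (v : Fin 2 → (Fin (2 + m) → F)) : Prop :=
  (1 - v 0 (Fin.castAdd m 0)) * (1 - v 1 (Fin.castAdd m 1))
        - v 0 (Fin.castAdd m 1) * v 1 (Fin.castAdd m 0) ≠ 0

open Classical in
theorem cu_reduce (F : Type*) [Field F] [Fintype F] (m : ℕ) :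
    (({A : Matrix (Fin (2 + m)) (Fin (2 + m)) F |
        IsUnit A ∧
          IsUnit (A - Matrix.diagonal
            (fun i : Fin (2 + m) => if (i : ℕ) < 2 then (1 : F) else 0))}.ncard : ℤ)) =
    ∑ v : Fin (2 + m) → (Fin (2 + m) → F),
      if LinearIndependent F v ∧ CuP m (fun i => v (Fin.castAdd m i)) then (1 : ℤ) else 0 := by
  set D : Matrix (Fin (2 + m)) (Fin (2 + m)) F := Matrix.diagonal
            (fun i : Fin (2 + m) => if (i : ℕ) < 2 then (1 : F) else 0) with hD
  have key : ∀ A : Matrix (Fin (2 + m)) (Fin (2 + m)) F, IsUnit A →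
      (IsUnit (A - D) ↔ CuP m (fun i => A⁻¹ (Fin.castAdd m i))) := by
    intro A hA
    have hdet := (Matrix.isUnit_iff_isUnit_det A).1 hA
    have e : A - D = (1 - D * A⁻¹) * A := by
      rw [Matrix.sub_mul, Matrix.one_mul, Matrix.mul_assoc, Matrix.nonsing_inv_mul A hdet,
        Matrix.mul_one]
    rw [e, Matrix.isUnit_iff_isUnit_det, Matrix.det_mul, IsUnit.mul_iff, cu_det]
    simp only [hdet, and_true, isUnit_iff_ne_zero]
    rfl
  rw [Finset.sum_boole, ← Set.ncard_coe_finset]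
  congr 1
  let inv : Matrix (Fin (2 + m)) (Fin (2 + m)) F → Matrix (Fin (2 + m)) (Fin (2 + m)) F := fun A => A⁻¹
  refine Set.ncard_congr (fun A _ => inv A) ?_ ?_ ?_
  · intro A hA
    simp only [Finset.coe_filter, Finset.mem_univ, true_and, Set.mem_ofPred_eq]
    exact ⟨Matrix.linearIndependent_rows_iff_isUnit.2 (Matrix.isUnit_nonsing_inv_iff.2 hA.1),
      (key A hA.1).1 hA.2⟩
  · intro A B hA hB h
    have := congrArg inv h
    simpa [inv, Matrix.nonsing_inv_nonsing_inv _ ((Matrix.isUnit_iff_isUnit_det _).1 hA.1),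
      Matrix.nonsing_inv_nonsing_inv _ ((Matrix.isUnit_iff_isUnit_det _).1 hB.1)] using this
  · intro (B : Matrix (Fin (2 + m)) (Fin (2 + m)) F) hB
    simp only [Finset.coe_filter, Finset.mem_univ, true_and, Set.mem_ofPred_eq] at hB
    have hu : IsUnit B :=
      Matrix.linearIndependent_rows_iff_isUnit.1 hB.1
    have hu' := Matrix.isUnit_nonsing_inv_iff.2 hu
    have hi := Matrix.nonsing_inv_nonsing_inv _ ((Matrix.isUnit_iff_isUnit_det _).1 hu)
    refine ⟨B⁻¹, ⟨hu', (key _ hu').2 ?_⟩, hi⟩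
    rw [hi]; exact hB.2

open Finset in
open Classical in
theorem cu_inner {F : Type*} [Field F] [Fintype F] (m : ℕ) (a : Fin (2 + m) → F) :
    (∑ b : Fin (2 + m) → F,
      if LinearIndependent F ![a, b] ∧ CuP m ![a, b] then (1 : ℤ) else 0) =
    ((Fintype.card F : ℤ) ^ (m + 2) - (Fintype.card F : ℤ) ^ (m + 1) - (Fintype.card F - 1)) *
      (if a (Fin.castAdd m 1) ≠ 0 then 1 else 0) +
    ((Fintype.card F : ℤ) ^ (m + 2) - (Fintype.card F : ℤ) ^ (m + 1) - Fintype.card F) *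
      ((if a (Fin.castAdd m 1) = 0 then 1 else 0) -
        (if a (Fin.castAdd m 1) = 0 ∧ a (Fin.castAdd m 0) = 1 then 1 else 0) -
        (if a = 0 then 1 else 0)) := by
  set q : ℤ := (Fintype.card F : ℤ) with hq
  set i0 : Fin (2 + m) := Fin.castAdd m 0 with hi0
  set i1 : Fin (2 + m) := Fin.castAdd m 1 with hi1
  have hq0 : q ≠ 0 := by simp [hq]
  have hne : i0 ≠ i1 := by simp [hi0, hi1, Fin.ext_iff]
  by_cases ha : a = 0
  · subst ha
    have : ∀ b : Fin (2 + m) → F, ¬ LinearIndependent F ![0, b] := by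
      intro b h
      exact h.ne_zero 0 rfl
    simp [this]
  by_cases hc : a i1 = 0 ∧ a i0 = 1
  · have : ∀ b : Fin (2 + m) → F, ¬ CuP m ![a, b] := by
      intro b h
      apply h
      change (1 - a i0) * (1 - b i1) - a i1 * b i0 = 0
      rw [hc.1, hc.2]; ring
    simp [this, hc, ha]
  -- main case
  let f : (Fin (2 + m) → F) →ₗ[F] F :=
    (1 - a i0) • LinearMap.proj i1 + a i1 • LinearMap.proj i0
  have hfa : ∀ b, f b = (1 - a i0) * b i1 + a i1 * b i0 := fun b => by simp [f]
  have hP : ∀ b, CuP m ![a, b] ↔ f b ≠ 1 - a i0 := by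
    intro b
    change (1 - a i0) * (1 - b i1) - a i1 * b i0 ≠ 0 ↔ _
    rw [hfa, not_iff_not, sub_eq_zero, ← sub_eq_zero, ← sub_eq_zero (b := 1 - a i0),
      ← neg_eq_zero]
    ring_nf
  have hsurj : Function.Surjective f := by
    intro c
    by_cases h : a i1 = 0
    · have h0 : 1 - a i0 ≠ 0 := by
        intro h'; exact hc ⟨h, (sub_eq_zero.1 h').symm⟩
      refine ⟨Pi.single i1 (c / (1 - a i0)), ?_⟩
      rw [hfa]; simp [h]; field_simp
    · refine ⟨Pi.single i0 (c / a i1), ?_⟩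
      rw [hfa]; simp [hne.symm]; field_simp
  have hfib := cu_fiber f hsurj (1 - a i0)
  have hfib' : (#{v : Fin (2 + m) → F | f v = 1 - a i0} : ℤ) = q ^ (m + 1) := by
    apply mul_right_cancel₀ hq0
    rw [hfib]; simp [hq]; ring
  have hcard : (Fintype.card (Fin (2 + m) → F) : ℤ) = q ^ (m + 2) := by
    simp [hq, add_comm]
  -- span
  have hinj : Function.Injective (fun c : F => c • a) := by
    intro c d h
    exact smul_left_injective F ha h
  have hspan : (∑ b : Fin (2 + m) → F,
      if (∃ c : F, c • a = b) ∧ f b ≠ 1 - a i0 then (1 : ℤ) else 0) =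
      ∑ c : F, if c * a i1 ≠ 1 - a i0 then (1 : ℤ) else 0 := by
    rw [Finset.sum_boole, Finset.sum_boole]
    congr 1
    symm
    refine Finset.card_bij (fun c _ => c • a) ?_ (fun c _ d _ h => hinj h) ?_
    · intro c hc'
      simp only [Finset.mem_filter, Finset.mem_univ, true_and] at hc' ⊢
      refine ⟨⟨c, rfl⟩, ?_⟩
      rw [hfa]
      intro h; apply hc'; rw [← h]; simp; ring
    · intro b hb
      simp only [Finset.mem_filter, Finset.mem_univ, true_and] at hb
      obtain ⟨⟨c, rfl⟩, h⟩ := hb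
      refine ⟨c, ?_, rfl⟩
      simp only [Finset.mem_filter, Finset.mem_univ, true_and]
      intro h'; apply h; rw [hfa]; simp only [Pi.smul_apply, smul_eq_mul]; linear_combination h'
  have hsplit : ∀ b : Fin (2 + m) → F,
      (if LinearIndependent F ![a, b] ∧ CuP m ![a, b] then (1 : ℤ) else 0) =
      1 - (if f b = 1 - a i0 then 1 else 0) -
        (if (∃ c : F, c • a = b) ∧ f b ≠ 1 - a i0 then (1 : ℤ) else 0) := by
    intro b
    rw [LinearIndependent.pair_iff' ha, hP]
    by_cases h1 : ∃ c : F, c • a = b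
    · have h1' : ¬ ∀ c : F, c • a ≠ b := by push Not; exact h1
      by_cases h2 : f b = 1 - a i0
      · rw [if_neg (fun h => h1' h.1), if_pos h2, if_neg (fun h => h.2 h2)]; simp
      · rw [if_neg (fun h => h1' h.1), if_neg h2, if_pos ⟨h1, h2⟩]; simp
    · have h1' : ∀ c : F, c • a ≠ b := by push Not at h1; exact h1
      by_cases h2 : f b = 1 - a i0
      · simp [h2]
      · rw [if_pos ⟨h1', h2⟩, if_neg h2, if_neg (fun h => h1 h.1)]; simp
  simp_rw [hsplit]
  rw [Finset.sum_sub_distrib, Finset.sum_sub_distrib, hspan, Finset.sum_boole, hfib']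
  simp only [Finset.sum_const, Finset.card_univ, nsmul_eq_mul, mul_one]
  rw [hcard]
  by_cases h : a i1 = 0
  · have h0 : (0 : F) ≠ 1 - a i0 := by
      intro h'; exact hc ⟨h, (sub_eq_zero.1 h'.symm).symm⟩
    have h1 : a i0 ≠ 1 := fun h' => hc ⟨h, h'⟩
    simp [h, h0, ha, h1, hq]
  · have : (∑ c : F, if c * a i1 ≠ 1 - a i0 then (1 : ℤ) else 0) = q - 1 := by
      have h3 : ∀ c : F, (if c * a i1 ≠ 1 - a i0 then (1 : ℤ) else 0) =
          1 - if c = (1 - a i0) / a i1 then 1 else 0 := by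
        intro c
        rw [eq_div_iff h]
        split_ifs <;> simp_all
      simp_rw [h3]
      rw [Finset.sum_sub_distrib]
      simp [hq]
    rw [this]
    simp [h, ha]

open Finset in
open Classical in
theorem cu_pairs {F : Type*} [Field F] [Fintype F] (m : ℕ) :
    (∑ v : Fin 2 → (Fin (2 + m) → F),
      if LinearIndependent F v ∧ CuP m v then (1 : ℤ) else 0) =
    ((Fintype.card F : ℤ) ^ (m + 2) - (Fintype.card F : ℤ) ^ (m + 1) - (Fintype.card F - 1)) *
      ((Fintype.card F : ℤ) ^ (m + 2) - (Fintype.card F : ℤ) ^ (m + 1)) +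
    ((Fintype.card F : ℤ) ^ (m + 2) - (Fintype.card F : ℤ) ^ (m + 1) - Fintype.card F) *
      ((Fintype.card F : ℤ) ^ (m + 1) - (Fintype.card F : ℤ) ^ m - 1) := by
  rw [← Equiv.sum_comp (finTwoArrowEquiv (Fin (2 + m) → F)).symm, Fintype.sum_prod_type]
  have h := cu_inner (F := F) m
  change (∑ a : Fin (2 + m) → F, ∑ b : Fin (2 + m) → F,
      if LinearIndependent F ![a, b] ∧ CuP m ![a, b] then (1 : ℤ) else 0) = _
  simp_rw [h]
  set q : ℤ := (Fintype.card F : ℤ) with hq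
  set i0 : Fin (2 + m) := Fin.castAdd m 0 with hi0
  set i1 : Fin (2 + m) := Fin.castAdd m 1 with hi1
  have hq0 : q ≠ 0 := by simp [hq]
  have hne : i0 ≠ i1 := by simp [hi0, hi1, Fin.ext_iff]
  have hcard : (Fintype.card (Fin (2 + m) → F) : ℤ) = q ^ (m + 2) := by
    simp [hq, add_comm]
  have e1 : (∑ a : Fin (2 + m) → F, if a i1 = 0 then (1 : ℤ) else 0) = q ^ (m + 1) := by
    have := cu_fiber (LinearMap.proj i1 : (Fin (2 + m) → F) →ₗ[F] F)
      (fun c => ⟨Pi.single i1 c, by simp⟩) 0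
    apply mul_right_cancel₀ hq0
    rw [Finset.sum_boole]
    refine this.trans ?_
    rw [hcard]; ring
  have e2 : (∑ a : Fin (2 + m) → F, if a i1 = 0 ∧ a i0 = 1 then (1 : ℤ) else 0) = q ^ m := by
    have := cu_fiber ((LinearMap.proj i1 : (Fin (2 + m) → F) →ₗ[F] F).prod (LinearMap.proj i0))
      (fun c => ⟨Pi.single i1 c.1 + Pi.single i0 c.2, by
        ext <;> simp [hne, hne.symm]⟩) (0, 1)
    apply mul_right_cancel₀ (mul_ne_zero hq0 hq0)
    rw [Finset.sum_boole]
    simp only [LinearMap.prod_apply, Function.prod, LinearMap.proj_apply, Prod.mk.injEq,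
      Fintype.card_prod, Nat.cast_mul] at this
    refine this.trans ?_
    rw [hcard]; ring
  have e3 : (∑ a : Fin (2 + m) → F, if a = 0 then (1 : ℤ) else 0) = 1 := by simp
  have e4 : (∑ a : Fin (2 + m) → F, if a i1 ≠ 0 then (1 : ℤ) else 0) =
      q ^ (m + 2) - q ^ (m + 1) := by
    have h4 : ∀ a : Fin (2 + m) → F, (if a i1 ≠ 0 then (1 : ℤ) else 0) =
      1 - if a i1 = 0 then (1 : ℤ) else 0 := by
      intro a; split_ifs <;> simp_all
    rw [Finset.sum_congr rfl (fun a _ => h4 a), Finset.sum_sub_distrib, e1, ← hcard]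
    simp
  rw [Finset.sum_add_distrib, ← Finset.mul_sum, ← Finset.mul_sum, Finset.sum_sub_distrib,
    Finset.sum_sub_distrib, e1, e2, e3, e4]


/-- For a finite field `F` with `q` elements, `n ≥ 2`, and `D = diag{1,1,0,…,0}`,
the number of matrices `A` such that both `A` and `A - D` are invertible (equivalently,
`|(D + GL_n(F)) ∩ GL_n(F)|`) equals
`(q^(2n) - q^(2n-1) - q^(2n-2) + q^(2n-3) + q^(n-1) - q^(n+1) + q) · ∏_{k=2}^{n-1} (q^n - q^k)`. -/
theorem card_unit_and_unit_sub_diag (F : Type*) [Field F] [Fintype F]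
    (n : ℕ) (hn : 2 ≤ n) :
    (({A : Matrix (Fin n) (Fin n) F |
        IsUnit A ∧
          IsUnit (A - Matrix.diagonal (fun i : Fin n => if (i : ℕ) < 2 then (1 : F) else 0))}.ncard
      : ℤ)) =
      ((Fintype.card F : ℤ) ^ (2 * n) - (Fintype.card F : ℤ) ^ (2 * n - 1)
          - (Fintype.card F : ℤ) ^ (2 * n - 2) + (Fintype.card F : ℤ) ^ (2 * n - 3)
          + (Fintype.card F : ℤ) ^ (n - 1) - (Fintype.card F : ℤ) ^ (n + 1)
          + (Fintype.card F : ℤ)) *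
        ∏ k ∈ Finset.Icc 2 (n - 1), ((Fintype.card F : ℤ) ^ n - (Fintype.card F : ℤ) ^ k) := by
  obtain ⟨m, rfl⟩ := Nat.exists_eq_add_of_le hn
  rw [cu_reduce, cu_ext, cu_pairs]
  have hprod : ∏ k ∈ Finset.Icc 2 (2 + m - 1),
      ((Fintype.card F : ℤ) ^ (2 + m) - (Fintype.card F : ℤ) ^ k) =
      ∏ i ∈ Finset.range m, ((Fintype.card F : ℤ) ^ Module.finrank F (Fin (2 + m) → F)
        - (Fintype.card F : ℤ) ^ (2 + i)) := by
    have : Finset.Icc 2 (2 + m - 1) = Finset.Ico 2 (2 + m) := by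
      ext k; simp only [Finset.mem_Icc, Finset.mem_Ico]; omega
    rw [this, Finset.prod_Ico_eq_prod_range]
    simp
  rw [hprod]
  congr 1
  have e1 : 2 * (2 + m) - 1 = 2 * m + 3 := by omega
  have e2 : 2 * (2 + m) - 2 = 2 * m + 2 := by omega
  have e3 : 2 * (2 + m) - 3 = 2 * m + 1 := by omega
  have e4 : 2 + m - 1 = m + 1 := by omega
  rw [e1, e2, e3, e4]
  ring
end

section
/- Let F be a finite field and n a positive integer. For any two adjacent vertices A and B of the unitary Cayley graph Cay(M_n(F), GL_n(F)), the number of common neighbors of A and B equals e_n, the number of linear derangements in M_n(F), i.e., the number of matrices X ∈ M_n(F) such that both X and X − I_n are invertible. -/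
/-- For any two adjacent vertices `A`, `B` of `Cay(M_n(F), GL_n(F))`, the number of their
common neighbors equals `eₙ`, the number of linear derangements, i.e. the number of
matrices `X ∈ M_n(F)` with both `X` and `X - Iₙ` invertible. -/
theorem card_commonNeighbors_of_adj (F : Type*) [Field F] [Fintype F]
    (n : ℕ) (hn : 0 < n) (A B : Matrix (Fin n) (Fin n) F)
    (hadj : (unitaryCayley F n).Adj A B) :
    ((unitaryCayley F n).commonNeighbors A B).ncard =
      {X : Matrix (Fin n) (Fin n) F | IsUnit X ∧ IsUnit (X - 1)}.ncard := by
  have : Nonempty (Fin n) := ⟨⟨0, hn⟩⟩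
  have key : ∀ P Q : Matrix (Fin n) (Fin n) F,
      (unitaryCayley F n).Adj P Q ↔ IsUnit (P - Q) := by
    intro P Q
    refine ⟨fun h => h.2, fun h => ⟨?_, h⟩⟩
    rintro rfl
    rw [sub_self] at h
    exact not_isUnit_zero h
  obtain ⟨u, hu⟩ := hadj.2
  have hB : B = A - u := by rw [hu]; abel
  have himg : (unitaryCayley F n).commonNeighbors A B =
      (fun X => A - (u : Matrix (Fin n) (Fin n) F) * X) ''
        {X : Matrix (Fin n) (Fin n) F | IsUnit X ∧ IsUnit (X - 1)} := by
    ext C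
    rw [SimpleGraph.mem_commonNeighbors, key, key]
    have e1 : A - C = u * ((↑u⁻¹ : Matrix (Fin n) (Fin n) F) * (A - C)) := by
      rw [Units.mul_inv_cancel_left]
    have e2 : B - C = u * ((↑u⁻¹ : Matrix (Fin n) (Fin n) F) * (A - C) - 1) := by
      rw [mul_sub, Units.mul_inv_cancel_left, mul_one, hB]; abel
    constructor
    · rintro ⟨h1, h2⟩
      rw [e1, Units.isUnit_units_mul] at h1
      rw [e2, Units.isUnit_units_mul] at h2
      refine ⟨_, ⟨h1, h2⟩, ?_⟩
      simp only [Units.mul_inv_cancel_left]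
      abel
    · rintro ⟨X, ⟨h1, h2⟩, rfl⟩
      have f1 : A - (A - (u : Matrix (Fin n) (Fin n) F) * X) = u * X := by abel
      have f2 : B - (A - (u : Matrix (Fin n) (Fin n) F) * X) = u * (X - 1) := by
        rw [hB, mul_sub, mul_one]; abel
      simp only [f1, f2, Units.isUnit_units_mul]
      exact ⟨h1, h2⟩
  rw [himg]
  apply Set.ncard_image_of_injective
  intro X Y h
  exact u.isUnit.mul_right_injective (sub_right_injective h)
end

section
/- Let F be a finite field with q elements, n ≥ 1 an integer, and let E_11 be the n×n matrix with 1 in position (1,1) and 0 elsewhere. The number of matrices A ∈ M_n(F) such that A is invertible and A + E_11 is not invertible equals q^(n−1) · ∏_{k=1}^{n−1} (q^n − q^k). -/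
open Matrix in
/-- Every nonzero vector is the column number `z` of an invertible matrix. -/
lemma aux_exists_GL_col {F : Type*} [Field F] {n : ℕ} (z : Fin n) (v : Fin n → F) (hv : v ≠ 0) :
    ∃ g : GL (Fin n) F, (fun i => g.1 i z) = v := by
  obtain ⟨i, hi⟩ := Function.ne_iff.1 hv
  have hd : ((1 : Matrix (Fin n) (Fin n) F).updateCol i v).det = v i := by
    rw [← Matrix.cramer_apply, Matrix.cramer_one]; rfl
  refine ⟨GeneralLinearGroup.mkOfDetNeZero
    (((1 : Matrix (Fin n) (Fin n) F).updateCol i v).submatrix id (Equiv.swap z i)) ?_, ?_⟩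
  · rw [Matrix.det_permute', hd]
    refine mul_ne_zero ?_ hi
    rcases Int.units_eq_one_or (Equiv.Perm.sign (Equiv.swap z i)) with h | h <;> simp [h]
  · ext j
    simp [GeneralLinearGroup.mkOfDetNeZero]

open Matrix in
/-- The number of invertible matrices with prescribed nonzero column `z` does not depend on
the column. -/
lemma aux_card_fiber {F : Type*} [Field F] [Fintype F] [DecidableEq F] {n : ℕ} (z : Fin n)
    (v : Fin n → F) (hv : v ≠ 0) :
    (Finset.univ.filter (fun g : GL (Fin n) F => (fun i => g.1 i z) = v)).card =
    (Finset.univ.filter (fun g : GL (Fin n) F => (fun i => g.1 i z) = Pi.single z 1)).card := by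
  obtain ⟨h, hh⟩ := aux_exists_GL_col z v hv
  have key : ∀ g : GL (Fin n) F, (fun i => g.1 i z) = g.1 *ᵥ Pi.single z 1 := by
    intro g; ext i; simp
  have hh' : h.1 *ᵥ Pi.single z 1 = v := by rw [← key]; exact hh
  symm
  refine Finset.card_bij (fun g _ => h * g) ?_ ?_ ?_
  · intro g hg
    simp only [Finset.mem_filter, Finset.mem_univ, true_and, key] at hg ⊢
    rw [Units.val_mul, ← Matrix.mulVec_mulVec, hg, hh']
  · intro a _ b _ hab
    exact mul_left_cancel hab
  · intro g hg
    refine ⟨h⁻¹ * g, ?_, by simp⟩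
    simp only [Finset.mem_filter, Finset.mem_univ, true_and, key] at hg ⊢
    rw [Units.val_mul, ← Matrix.mulVec_mulVec, hg, ← hh', Matrix.mulVec_mulVec, ← Units.val_mul,
      inv_mul_cancel, Units.val_one, Matrix.one_mulVec]

open Matrix in
lemma aux_card_const {F : Type*} [Field F] [Fintype F] [DecidableEq F] (m : ℕ) :
    ((Finset.univ.filter
      (fun g : GL (Fin (m+1)) F => (fun i => g.1 i 0) = Pi.single 0 1)).card : ℤ) =
    ∏ k ∈ Finset.Icc 1 m, ((Fintype.card F : ℤ) ^ (m+1) - (Fintype.card F : ℤ) ^ k) := by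
  have hq : 1 < Fintype.card F := Fintype.one_lt_card
  have h1 := Finset.card_eq_sum_card_fiberwise (s := (Finset.univ : Finset (GL (Fin (m+1)) F)))
    (t := Finset.univ.erase (0 : Fin (m+1) → F)) (f := fun g => fun i => g.1 i 0) (by
      intro g _
      simp only [Finset.coe_erase, Finset.coe_univ, Set.mem_sdiff, Set.mem_univ, true_and,
        Set.mem_singleton_iff]
      intro h0
      have hdet : g.1.det = 0 := Matrix.det_eq_zero_of_column_eq_zero 0 (fun i => congrFun h0 i)
      exact ((Matrix.isUnit_iff_isUnit_det _).1 g.isUnit).ne_zero hdet)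
  rw [Finset.sum_congr rfl (fun v hv => aux_card_fiber 0 v (Finset.ne_of_mem_erase hv)),
    Finset.sum_const, Finset.card_erase_of_mem (Finset.mem_univ _), Finset.card_univ,
    Finset.card_univ, ← Nat.card_eq_fintype_card, Matrix.card_GL_field, Fin.prod_univ_succ] at h1
  simp only [Fintype.card_pi, Finset.prod_const, Finset.card_univ, Fintype.card_fin, Fin.val_zero,
    pow_zero, smul_eq_mul, Fin.val_succ] at h1
  have hpos : 0 < Fintype.card F ^ (m+1) - 1 := by
    have := Nat.one_lt_pow (n := m+1) (by omega) hq
    omega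
  rw [← Nat.eq_of_mul_eq_mul_left hpos h1, Nat.cast_prod,
    Fin.prod_univ_eq_prod_range
      (fun i => ((Fintype.card F ^ (m+1) - Fintype.card F ^ (i+1) : ℕ) : ℤ)) m,
    Finset.range_eq_Ico,
    Finset.prod_Ico_add' (fun i => ((Fintype.card F ^ (m+1) - Fintype.card F ^ i : ℕ) : ℤ)) 0 m 1]
  refine Finset.prod_congr (by ext; simp) ?_
  intro k hk
  rw [Finset.mem_Icc] at hk
  rw [Nat.cast_sub (Nat.pow_le_pow_right (by omega) (by omega))]
  push_cast
  rfl

open Matrix in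
lemma aux_not_isUnit_iff {F : Type*} [Field F] {n : ℕ} (z : Fin n)
    (A : GL (Fin n) F) :
    ¬ IsUnit (A.1 + Matrix.single z z (1 : F)) ↔ (A⁻¹).1 z z = -1 := by
  have hA : IsUnit A.1.det := (Matrix.isUnit_iff_isUnit_det _).1 A.isUnit
  have hs : Matrix.single z z (1 : F) =
      replicateCol Unit (Pi.single z (1 : F)) * replicateRow Unit (Pi.single z (1 : F)) := by
    ext i j
    by_cases hi : z = i <;> by_cases hj : z = j <;>
      simp [Matrix.mul_apply, Matrix.single_apply, Pi.single_apply, hi, hj, eq_comm (b := z)] <;>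
      simp only [eq_comm]
  have this : (1 + replicateRow Unit (Pi.single z (1 : F)) * A.1⁻¹ *
      replicateCol Unit (Pi.single z (1 : F))).det = 1 + (A⁻¹).1 z z := by
    rw [Matrix.det_unique]
    simp [Matrix.mul_apply, Pi.single_apply]
  rw [Matrix.isUnit_iff_isUnit_det, hs, det_add_replicateCol_mul_replicateRow hA,
    isUnit_iff_ne_zero, not_not, mul_eq_zero, this]
  simp only [hA.ne_zero, false_or]
  constructor
  · intro h; linear_combination h
  · intro h; rw [h]; ring

open Matrix in
lemma aux_card_T {F : Type*} [Fintype F] [DecidableEq F] (m : ℕ) (c : F) :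
    (Finset.univ.filter (fun v : Fin (m+1) → F => v 0 = c)).card = Fintype.card F ^ m := by
  have : Fintype.card F ^ m = (Finset.univ : Finset (Fin m → F)).card := by
    simp
  rw [this]
  symm
  refine Finset.card_bij (fun w _ => Fin.cons c w) ?_ ?_ ?_
  · intro w _; simp
  · intro a _ b _ h; exact (Fin.cons_injective2 h).2
  · intro v hv
    simp only [Finset.mem_filter, Finset.mem_univ, true_and] at hv
    exact ⟨Fin.tail v, Finset.mem_univ _, by rw [← hv]; exact Fin.cons_self_tail v⟩

/-- For a finite field `F` with `q` elements and `n ≥ 1`, the number of matrices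
`A ∈ M_n(F)` such that `A` is invertible and `A + E₁₁` is not invertible equals
`q^(n-1) · ∏_{k=1}^{n-1} (qⁿ - qᵏ)`. -/
theorem card_unit_and_not_unit_add_stdBasisMatrix (F : Type*) [Field F] [Fintype F]
    (n : ℕ) (hn : 0 < n) :
    (({A : Matrix (Fin n) (Fin n) F |
        IsUnit A ∧
          ¬ IsUnit (A + Matrix.single (⟨0, hn⟩ : Fin n) ⟨0, hn⟩ (1 : F))}.ncard : ℤ)) =
      (Fintype.card F : ℤ) ^ (n - 1) *
        ∏ k ∈ Finset.Icc 1 (n - 1), ((Fintype.card F : ℤ) ^ n - (Fintype.card F : ℤ) ^ k) := by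
  classical
  obtain ⟨m, rfl⟩ : ∃ m, n = m + 1 := ⟨n - 1, by omega⟩
  have hz : (⟨0, hn⟩ : Fin (m+1)) = 0 := rfl
  rw [hz]
  have h1 : {A : Matrix (Fin (m+1)) (Fin (m+1)) F |
        IsUnit A ∧ ¬ IsUnit (A + Matrix.single (0 : Fin (m+1)) 0 (1 : F))} =
      (fun g : Matrix.GeneralLinearGroup (Fin (m+1)) F => (g⁻¹).1) ''
        ((Finset.univ.filter (fun g : Matrix.GeneralLinearGroup (Fin (m+1)) F => g.1 0 0 = -1) :
          Finset _) : Set _) := by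
    ext A
    simp only [Set.mem_ofPred_eq, Set.mem_image, Finset.coe_filter, Finset.mem_univ, true_and]
    constructor
    · rintro ⟨⟨u, rfl⟩, h⟩
      exact ⟨u⁻¹, (aux_not_isUnit_iff 0 u).1 h, by rw [inv_inv]⟩
    · rintro ⟨g, hg, rfl⟩
      refine ⟨(g⁻¹).isUnit, (aux_not_isUnit_iff 0 g⁻¹).2 ?_⟩
      rw [inv_inv]; exact hg
  rw [h1, Set.ncard_image_of_injective _ (fun a b h => inv_injective (Units.ext h)),
    Set.ncard_coe_finset]
  have h2 := Finset.card_eq_sum_card_fiberwise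
    (s := Finset.univ.filter (fun g : Matrix.GeneralLinearGroup (Fin (m+1)) F => g.1 0 0 = -1))
    (t := Finset.univ.filter (fun v : Fin (m+1) → F => v 0 = -1)) (f := fun g => fun i => g.1 i 0)
    (by
      intro g hg
      simpa using hg)
  rw [h2, Finset.sum_congr rfl (g := fun _ => (Finset.univ.filter
      (fun g : Matrix.GeneralLinearGroup (Fin (m+1)) F =>
        (fun i => g.1 i 0) = Pi.single 0 1)).card), Finset.sum_const, smul_eq_mul,
    Nat.cast_mul]
  · have a := aux_card_T m (-1 : F)
    have b := aux_card_const (F := F) m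
    rw [Nat.add_sub_cancel, ← b, ← Nat.cast_pow, ← a]
  · intro v hv
    simp only [Finset.mem_filter, Finset.mem_univ, true_and] at hv
    rw [← aux_card_fiber 0 v (by rintro rfl; simp at hv)]
    congr 1
    ext g
    simp only [Finset.mem_filter, Finset.mem_univ, true_and, and_iff_right_iff_imp]
    intro h
    rw [← hv, ← h]
end

section
/- Let F be a finite field with q elements, n ≥ 2 an integer, and let A_1 ∈ M_2(F) be a fixed invertible 2×2 matrix. The number of invertible matrices A ∈ GL_n(F) whose 2nd leading principal submatrix (the upper-left 2×2 block) equals A_1 is q^(2n−4) · ∏_{k=2}^{n−1} (q^n − q^k). -/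
/-- Parametrization of the matrices with given upper-left block via the Schur complement. -/
noncomputable def schurParam {F : Type*} [Field F] (m : ℕ) (A : Matrix (Fin 2) (Fin 2) F)
    (p : (Matrix (Fin 2) (Fin m) F × Matrix (Fin m) (Fin 2) F) × Matrix.GeneralLinearGroup (Fin m) F) :
    Matrix (Fin (2 + m)) (Fin (2 + m)) F :=
  Matrix.reindex finSumFinEquiv finSumFinEquiv
    (Matrix.fromBlocks A p.1.1 p.1.2 ((p.2 : Matrix (Fin m) (Fin m) F) + p.1.2 * A⁻¹ * p.1.1))

lemma schurParam_injective {F : Type*} [Field F] (m : ℕ) (A : Matrix (Fin 2) (Fin 2) F) :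
    Function.Injective (schurParam m A) := by
  rintro ⟨⟨B, C⟩, g⟩ ⟨⟨B', C'⟩, g'⟩ h
  have h2 := (Matrix.reindex finSumFinEquiv finSumFinEquiv).injective h
  rw [Matrix.fromBlocks_inj] at h2
  obtain ⟨-, h3, h4, h5⟩ := h2
  simp only at h3 h4 h5
  subst h3 h4
  have h6 := add_right_cancel h5
  rw [Units.ext h6]

lemma isUnit_block_iff {F : Type*} [Field F] (m : ℕ) (A : Matrix (Fin 2) (Fin 2) F)
    (hA : IsUnit A) (B : Matrix (Fin 2) (Fin m) F) (C : Matrix (Fin m) (Fin 2) F)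
    (D : Matrix (Fin m) (Fin m) F) :
    IsUnit (Matrix.reindex finSumFinEquiv finSumFinEquiv (Matrix.fromBlocks A B C D)) ↔
      IsUnit (D - C * A⁻¹ * B) := by
  haveI := hA.invertible
  rw [Matrix.isUnit_iff_isUnit_det, Matrix.det_reindex_self, Matrix.det_fromBlocks₁₁,
    Matrix.invOf_eq_nonsing_inv, IsUnit.mul_iff, ← Matrix.isUnit_iff_isUnit_det,
    ← Matrix.isUnit_iff_isUnit_det]
  simp [hA]

lemma range_schurParam {F : Type*} [Field F] (m : ℕ) (hn : 2 ≤ 2 + m)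
    (A₁ : Matrix (Fin 2) (Fin 2) F) (hA₁ : IsUnit A₁) :
    Set.range (schurParam m A₁) = {A : Matrix (Fin (2 + m)) (Fin (2 + m)) F |
        IsUnit A ∧ ∀ i j : Fin 2, A (Fin.castLE hn i) (Fin.castLE hn j) = A₁ i j} := by
  have hc : ∀ i : Fin 2, Fin.castLE hn i = finSumFinEquiv (Sum.inl i : Fin 2 ⊕ Fin m) :=
    fun i => rfl
  ext M
  constructor
  · rintro ⟨⟨⟨B, C⟩, g⟩, rfl⟩
    refine ⟨?_, ?_⟩
    · rw [schurParam, isUnit_block_iff m A₁ hA₁]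
      simp
    · intro i j
      rw [hc, hc, schurParam, Matrix.reindex_apply, Matrix.submatrix_apply,
        Equiv.symm_apply_apply, Equiv.symm_apply_apply, Matrix.fromBlocks_apply₁₁]
  · rintro ⟨hu, hM⟩
    obtain ⟨N, rfl⟩ := (Matrix.reindex (α := F) (finSumFinEquiv (m := 2) (n := m))
      (finSumFinEquiv (m := 2) (n := m))).surjective M
    have hA : N.toBlocks₁₁ = A₁ := by
      ext i j
      rw [← hM i j, hc, hc, Matrix.reindex_apply, Matrix.submatrix_apply,
        Equiv.symm_apply_apply, Equiv.symm_apply_apply]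
      rfl
    rw [← Matrix.fromBlocks_toBlocks N, hA, isUnit_block_iff m A₁ hA₁] at hu
    refine ⟨⟨⟨N.toBlocks₁₂, N.toBlocks₂₁⟩, hu.unit⟩, ?_⟩
    rw [schurParam]
    congr 1
    conv_rhs => rw [← Matrix.fromBlocks_toBlocks N, hA]
    simp

/-- For a finite field `F` with `q` elements, `n ≥ 2`, and a fixed invertible `2 × 2`
matrix `A₁`, the number of invertible `n × n` matrices whose upper-left `2 × 2` block
equals `A₁` is `q^(2n-4) · ∏_{k=2}^{n-1} (qⁿ - qᵏ)`. -/
theorem card_invertible_with_principal_submatrix (F : Type*) [Field F] [Fintype F]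
    (n : ℕ) (hn : 2 ≤ n) (A₁ : Matrix (Fin 2) (Fin 2) F) (hA₁ : IsUnit A₁) :
    (({A : Matrix (Fin n) (Fin n) F |
        IsUnit A ∧ ∀ i j : Fin 2, A (Fin.castLE hn i) (Fin.castLE hn j) = A₁ i j}.ncard : ℤ)) =
      (Fintype.card F : ℤ) ^ (2 * n - 4) *
        ∏ k ∈ Finset.Icc 2 (n - 1), ((Fintype.card F : ℤ) ^ n - (Fintype.card F : ℤ) ^ k) := by
  obtain ⟨m, rfl⟩ := Nat.exists_eq_add_of_le hn
  classical
  rw [← range_schurParam m hn A₁ hA₁, ← Nat.card_coe_set_eq,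
    Nat.card_range_of_injective (schurParam_injective m A₁), Nat.card_prod, Nat.card_prod,
    Matrix.card_GL_field]
  have h1 : Nat.card (Matrix (Fin 2) (Fin m) F) = Fintype.card F ^ (2 * m) := by
    simp [Matrix, Nat.card_eq_fintype_card, ← pow_mul, mul_comm]
  have h2 : Nat.card (Matrix (Fin m) (Fin 2) F) = Fintype.card F ^ (2 * m) := by
    simp [Matrix, Nat.card_eq_fintype_card, ← pow_mul]
  rw [h1, h2]
  set q := Fintype.card F with hq
  have hq1 : 1 ≤ q := Fintype.card_pos
  have h3 : ((∏ i : Fin m, (q ^ m - q ^ (i : ℕ)) : ℕ) : ℤ)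
      = ∏ i ∈ Finset.range m, ((q : ℤ) ^ m - (q : ℤ) ^ i) := by
    rw [Finset.prod_range, Nat.cast_prod]
    refine Finset.prod_congr rfl fun i _ => ?_
    rw [Nat.cast_sub (Nat.pow_le_pow_right hq1 i.2.le)]
    push_cast
    rfl
  have h4 : ∏ k ∈ Finset.Icc 2 (2 + m - 1), ((q : ℤ) ^ (2 + m) - (q : ℤ) ^ k)
      = (q : ℤ) ^ (2 * m) * ∏ i ∈ Finset.range m, ((q : ℤ) ^ m - (q : ℤ) ^ i) := by
    have h5 : Finset.Icc 2 (2 + m - 1) = Finset.Ico 2 (2 + m) := by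
      ext k
      simp only [Finset.mem_Icc, Finset.mem_Ico]
      omega
    rw [h5, Finset.prod_Ico_eq_prod_range, Nat.add_sub_cancel_left]
    have h6 : (q : ℤ) ^ (2 * m) = ∏ i ∈ Finset.range m, (q : ℤ) ^ 2 := by
      simp [pow_mul]
    rw [h6, ← Finset.prod_mul_distrib]
    refine Finset.prod_congr rfl fun i _ => ?_
    ring
  have h7 : 2 * (2 + m) - 4 = 2 * m := by omega
  rw [h4, h7, Nat.cast_mul, h3]
  push_cast
  ring
end

section
/- Let F be a finite field with q elements, n > 2 an integer, let E_11 be the n×n matrix with 1 in position (1,1) and 0 elsewhere, and let D = diag{1,1,0,…,0}. In the unitary Cayley graph Cay(M_n(F), GL_n(F)), the zero matrix 0 is non-adjacent to both E_11 and D, and the number of common neighbors of E_11 and 0 differs from the number of common neighbors of D and 0. -/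
open Matrix in
/-- If `C` is invertible, but `E₁₁ - C` is not, then the corner entry of `C⁻¹` is `1`. -/
lemma ucg_forward {F : Type*} [Field F] {n : ℕ} (a : Fin n)
    (C : Matrix (Fin n) (Fin n) F) (hC : IsUnit C)
    (h : ¬ IsUnit (Matrix.single a a (1 : F) - C)) : C⁻¹ a a = 1 := by
  have hCd : IsUnit C.det := (Matrix.isUnit_iff_isUnit_det _).1 hC
  rw [Matrix.isUnit_iff_isUnit_det, isUnit_iff_ne_zero, not_not,
    ← Matrix.exists_mulVec_eq_zero_iff] at h
  obtain ⟨v, hv, h⟩ := h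
  rw [Matrix.sub_mulVec, sub_eq_zero] at h
  have h1 : C *ᵥ v = Pi.single a (v a) := by
    rw [← h]; ext i
    simp [Matrix.single_mulVec, Function.update_apply, Pi.single_apply]
  have h2 : v = C⁻¹ *ᵥ Pi.single a (v a) := by
    rw [← h1, Matrix.mulVec_mulVec, Matrix.nonsing_inv_mul _ hCd, Matrix.one_mulVec]
  have h3 : v a ≠ 0 := by
    intro h0
    apply hv
    rw [h2, h0]; simp
  have h4 := congrFun h2 a
  rw [Matrix.mulVec_single] at h4
  simp at h4
  have h5 : (C⁻¹ a a - 1) * v a = 0 := by linear_combination -h4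
  rcases mul_eq_zero.1 h5 with h | h
  · linear_combination h
  · exact absurd h h3

open Matrix in
/-- If the upper left `2 × 2` block of an invertible `P` has a fixed vector,
then `D - P⁻¹` is singular. -/
lemma ucg_backward {F : Type*} [Field F] {n : ℕ} (a b : Fin n) (ha : (a : ℕ) = 0)
    (hb : (b : ℕ) = 1)
    (P : Matrix (Fin n) (Fin n) F) (hP : IsUnit P) (u w : F) (huw : u ≠ 0 ∨ w ≠ 0)
    (h1 : P a a * u + P a b * w = u) (h2 : P b a * u + P b b * w = w) :
    ¬ IsUnit (Matrix.diagonal (fun i : Fin n => if (i : ℕ) < 2 then (1 : F) else 0) - P⁻¹) := by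
  have hPd : IsUnit P.det := (Matrix.isUnit_iff_isUnit_det _).1 hP
  have hab : a ≠ b := by intro h; rw [h] at ha; omega
  rw [Matrix.isUnit_iff_isUnit_det, isUnit_iff_ne_zero, not_not,
    ← Matrix.exists_mulVec_eq_zero_iff]
  set x : Fin n → F := Pi.single a u + Pi.single b w with hx
  have hxa : x a = u := by simp [hx, hab]
  have hxb : x b = w := by simp [hx, hab.symm]
  have hPx : ∀ i, (P *ᵥ x) i = P i a * u + P i b * w := by
    intro i
    simp [hx, Matrix.mulVec_add, Matrix.mulVec_single, mul_comm]
  have hinv : P⁻¹ *ᵥ (P *ᵥ x) = x := by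
    rw [Matrix.mulVec_mulVec, Matrix.nonsing_inv_mul _ hPd, Matrix.one_mulVec]
  refine ⟨P *ᵥ x, ?_, ?_⟩
  · intro h0
    rw [h0, Matrix.mulVec_zero] at hinv
    rcases huw with h | h
    · apply h; rw [← hxa, ← hinv]; rfl
    · apply h; rw [← hxb, ← hinv]; rfl
  · rw [Matrix.sub_mulVec, hinv, sub_eq_zero]
    ext i
    rw [Matrix.mulVec_diagonal, hPx]
    by_cases hia : i = a
    · subst hia; rw [hxa, if_pos (by omega), one_mul, h1]
    by_cases hib : i = b
    · subst hib; rw [hxb, if_pos (by omega), one_mul, h2]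
    have : ¬ (i : ℕ) < 2 := by
      intro h
      have h3 : (i : ℕ) ≠ a := fun h => hia (Fin.ext h)
      have h4 : (i : ℕ) ≠ b := fun h => hib (Fin.ext h)
      omega
    simp [this, hx, hia, hib]

open Matrix Classical in
/-- The key map. -/
noncomputable def ucgMap {F : Type*} [Field F] {n : ℕ} (a b : Fin n)
    (P : Matrix (Fin n) (Fin n) F) : Matrix (Fin n) (Fin n) F :=
  if P a b = 0 ∧ P b b = 1 then P else P * Matrix.transvection b a (- P b a)

lemma ucg_lt {F : Type*} [Field F] [Fintype F] {n : ℕ} (a b c : Fin n) (hab : a ≠ b)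
    (hac : a ≠ c) (hbc : b ≠ c) :
    {P : Matrix (Fin n) (Fin n) F | IsUnit P ∧ P a a = 1}.ncard <
    {P : Matrix (Fin n) (Fin n) F | IsUnit P ∧ ∃ u w : F, (u ≠ 0 ∨ w ≠ 0) ∧
      P a a * u + P a b * w = u ∧ P b a * u + P b b * w = w}.ncard := by
  have hcol : ∀ P : Matrix (Fin n) (Fin n) F, ∀ i, ucgMap a b P i b = P i b := by
    intro P i
    unfold ucgMap
    split_ifs
    · rfl
    · rw [Matrix.mul_transvection_apply_of_ne _ _ _ _ hab.symm]
  have hinj : Set.InjOn (ucgMap a b)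
      {P : Matrix (Fin n) (Fin n) F | IsUnit P ∧ P a a = 1} := by
    rintro P ⟨-, hP⟩ Q ⟨-, hQ⟩ h
    have e1 : P a b = Q a b := by rw [← hcol P, ← hcol Q, h]
    have e2 : P b b = Q b b := by rw [← hcol P, ← hcol Q, h]
    by_cases hc : P a b = 0 ∧ P b b = 1
    · have hc' : Q a b = 0 ∧ Q b b = 1 := by rw [← e1, ← e2]; exact hc
      unfold ucgMap at h
      rwa [if_pos hc, if_pos hc'] at h
    · have hc' : ¬ (Q a b = 0 ∧ Q b b = 1) := by rw [← e1, ← e2]; exact hc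
      unfold ucgMap at h
      rw [if_neg hc, if_neg hc'] at h
      have f1 := congrFun (congrFun h a) a
      have f2 := congrFun (congrFun h b) a
      rw [Matrix.mul_transvection_apply_same, Matrix.mul_transvection_apply_same] at f1 f2
      rw [← e1, hP, hQ] at f1
      rw [← e2] at f2
      have g1 : (P b a - Q b a) * P a b = 0 := by linear_combination -f1
      have g2 : (P b a - Q b a) * (1 - P b b) = 0 := by linear_combination f2
      have g : P b a = Q b a := by
        rcases mul_eq_zero.1 g1 with h | h
        · exact sub_eq_zero.1 h
        rcases mul_eq_zero.1 g2 with h' | h'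
        · exact sub_eq_zero.1 h'
        exact absurd ⟨h, (sub_eq_zero.1 h').symm⟩ hc
      rw [g] at h
      have hu : IsUnit (Matrix.transvection b a (- Q b a)) := by
        rw [Matrix.isUnit_iff_isUnit_det, Matrix.det_transvection_of_ne _ _ hab.symm]
        exact isUnit_one
      exact hu.mul_right_cancel h
  rw [← hinj.ncard_image]
  apply Set.ncard_lt_ncard _ (Set.toFinite _)
  rw [Set.ssubset_iff_of_subset]
  · -- the missing element
    refine ⟨(Equiv.swap a c).permMatrix F, ⟨?_, 0, 1, Or.inr one_ne_zero, ?_, ?_⟩, ?_⟩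
    · rw [Matrix.isUnit_iff_isUnit_det, Matrix.det_permutation]
      exact (Units.isUnit _).map (Int.castRingHom F)
    · simp [Equiv.Perm.permMatrix, PEquiv.toMatrix_apply, hbc.symm]
    · simp [Equiv.Perm.permMatrix, PEquiv.toMatrix_apply,
        Equiv.swap_apply_of_ne_of_ne hab.symm hbc]
    · rintro ⟨P, ⟨-, hP⟩, h⟩
      have e1 := hcol P a
      have e2 := hcol P b
      rw [h] at e1 e2
      have c1 : P a b = 0 := by
        rw [← e1]; simp [Equiv.Perm.permMatrix, PEquiv.toMatrix_apply, hbc.symm]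
      have c2 : P b b = 1 := by
        rw [← e2]; simp [Equiv.Perm.permMatrix, PEquiv.toMatrix_apply,
          Equiv.swap_apply_of_ne_of_ne hab.symm hbc]
      unfold ucgMap at h
      rw [if_pos ⟨c1, c2⟩] at h
      rw [h] at hP
      simp [Equiv.Perm.permMatrix, PEquiv.toMatrix_apply, hac.symm] at hP
  · rintro _ ⟨P, ⟨hu, hP⟩, rfl⟩
    unfold ucgMap
    split_ifs with hc
    · exact ⟨hu, 0, 1, Or.inr one_ne_zero, by simp [hc.1], by simp [hc.2]⟩
    · refine ⟨hu.mul ?_, 1, P b a, Or.inl one_ne_zero, ?_, ?_⟩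
      · rw [Matrix.isUnit_iff_isUnit_det, Matrix.det_transvection_of_ne _ _ hab.symm]
        exact isUnit_one
      · rw [Matrix.mul_transvection_apply_same,
          Matrix.mul_transvection_apply_of_ne _ _ _ _ hab.symm, hP]
        ring
      · rw [Matrix.mul_transvection_apply_same,
          Matrix.mul_transvection_apply_of_ne _ _ _ _ hab.symm]
        ring

lemma ucg_inv_injOn {F : Type*} [Field F] {n : ℕ} (S : Set (Matrix (Fin n) (Fin n) F))
    (hS : ∀ P ∈ S, IsUnit P) : Set.InjOn (fun P => P⁻¹) S := by
  intro P hP Q hQ h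
  have h' : P⁻¹ = Q⁻¹ := h
  rw [← Matrix.nonsing_inv_nonsing_inv P ((Matrix.isUnit_iff_isUnit_det _).1 (hS P hP)), h',
    Matrix.nonsing_inv_nonsing_inv Q ((Matrix.isUnit_iff_isUnit_det _).1 (hS Q hQ))]

/-- Splitting the invertible matrices. -/
lemma ucg_split {F : Type*} [Field F] [Fintype F] {n : ℕ} (A : Matrix (Fin n) (Fin n) F)
    (hn : 0 < n) (hA : ¬ IsUnit A) :
    ((unitaryCayley F n).commonNeighbors A 0).ncard +
      {C : Matrix (Fin n) (Fin n) F | IsUnit C ∧ ¬ IsUnit (A - C)}.ncard =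
      {C : Matrix (Fin n) (Fin n) F | IsUnit C}.ncard := by
  have : Nonempty (Fin n) := ⟨⟨0, hn⟩⟩
  have h : (unitaryCayley F n).commonNeighbors A 0 =
      {C : Matrix (Fin n) (Fin n) F | IsUnit C ∧ IsUnit (A - C)} := by
    ext C
    rw [SimpleGraph.mem_commonNeighbors]
    simp only [unitaryCayley, zero_sub, IsUnit.neg_iff, Set.mem_ofPred_eq]
    constructor
    · rintro ⟨⟨-, h1⟩, -, h2⟩
      exact ⟨h2, h1⟩
    · rintro ⟨h2, h1⟩
      refine ⟨⟨?_, h1⟩, ?_, h2⟩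
      · rintro rfl; exact hA h2
      · rintro rfl; exact not_isUnit_zero h2
  rw [h, ← Set.ncard_union_eq _ (Set.toFinite _) (Set.toFinite _)]
  · congr 1
    ext C
    simp only [Set.mem_union, Set.mem_ofPred_eq]
    tauto
  · rw [Set.disjoint_left]
    rintro C ⟨-, h1⟩ ⟨-, h2⟩
    exact h2 h1

/-- For `n > 2`, in `Cay(M_n(F), GL_n(F))` the zero matrix is non-adjacent to both
`E₁₁` and `D = diag{1,1,0,…,0}`, and the number of common neighbors of `E₁₁` and `0`
differs from the number of common neighbors of `D` and `0`. -/
theorem commonNeighbors_E11_ne_commonNeighbors_diag (F : Type*) [Field F] [Fintype F]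
    (n : ℕ) (hn : 2 < n) :
    ¬ (unitaryCayley F n).Adj
        (Matrix.single (⟨0, by omega⟩ : Fin n) ⟨0, by omega⟩ (1 : F)) 0 ∧
    ¬ (unitaryCayley F n).Adj
        (Matrix.diagonal (fun i : Fin n => if (i : ℕ) < 2 then (1 : F) else 0)) 0 ∧
    ((unitaryCayley F n).commonNeighbors
        (Matrix.single (⟨0, by omega⟩ : Fin n) ⟨0, by omega⟩ (1 : F)) 0).ncard ≠
      ((unitaryCayley F n).commonNeighbors
        (Matrix.diagonal (fun i : Fin n => if (i : ℕ) < 2 then (1 : F) else 0)) 0).ncard := by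
  have hE : ¬ IsUnit (Matrix.single (⟨0, by omega⟩ : Fin n) (⟨0, by omega⟩ : Fin n) (1 : F)) := by
    rw [Matrix.isUnit_iff_isUnit_det, isUnit_iff_ne_zero, not_not]
    apply Matrix.det_eq_zero_of_row_eq_zero (⟨2, hn⟩ : Fin n)
    intro j
    simp [Matrix.single_apply]
  have hD : ¬ IsUnit
      (Matrix.diagonal (fun i : Fin n => if (i : ℕ) < 2 then (1 : F) else 0)) := by
    rw [Matrix.isUnit_iff_isUnit_det, isUnit_iff_ne_zero, not_not]
    apply Matrix.det_eq_zero_of_row_eq_zero (⟨2, hn⟩ : Fin n)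
    intro j
    simp [Matrix.diagonal_apply]
  refine ⟨fun h => hE (by simpa using h.2), fun h => hD (by simpa using h.2), ?_⟩
  have s1 := ucg_split _ (by omega) hE
  have s2 := ucg_split _ (by omega) hD
  have hlt := ucg_lt (F := F) (⟨0, by omega⟩ : Fin n) ⟨1, by omega⟩ ⟨2, hn⟩
    (by simp) (by simp) (by simp)
  have l1 : {C : Matrix (Fin n) (Fin n) F | IsUnit C ∧
      ¬ IsUnit (Matrix.single (⟨0, by omega⟩ : Fin n) (⟨0, by omega⟩ : Fin n) (1 : F) - C)}.ncard ≤
      {P : Matrix (Fin n) (Fin n) F | IsUnit P ∧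
        P (⟨0, by omega⟩ : Fin n) ⟨0, by omega⟩ = 1}.ncard := by
    apply Set.ncard_le_ncard_of_injOn (fun P => P⁻¹) _
      (ucg_inv_injOn _ fun P hP => hP.1) (Set.toFinite _)
    rintro C ⟨h1, h2⟩
    exact ⟨Matrix.isUnit_nonsing_inv_iff.2 h1, ucg_forward _ C h1 h2⟩
  have l2 : {P : Matrix (Fin n) (Fin n) F | IsUnit P ∧ ∃ u w : F, (u ≠ 0 ∨ w ≠ 0) ∧
      P (⟨0, by omega⟩ : Fin n) ⟨0, by omega⟩ * u + P ⟨0, by omega⟩ ⟨1, by omega⟩ * w = u ∧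
      P ⟨1, by omega⟩ ⟨0, by omega⟩ * u + P ⟨1, by omega⟩ ⟨1, by omega⟩ * w = w}.ncard ≤
      {C : Matrix (Fin n) (Fin n) F | IsUnit C ∧ ¬ IsUnit
        (Matrix.diagonal (fun i : Fin n => if (i : ℕ) < 2 then (1 : F) else 0) - C)}.ncard := by
    apply Set.ncard_le_ncard_of_injOn (fun P => P⁻¹) _
      (ucg_inv_injOn _ fun P hP => hP.1) (Set.toFinite _)
    rintro P ⟨h1, u, w, huw, h2, h3⟩
    exact ⟨Matrix.isUnit_nonsing_inv_iff.2 h1,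
      ucg_backward _ _ rfl rfl P h1 u w huw h2 h3⟩
  omega
end
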